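/- Let p, q ≥ 1, let A_1,…,A_p, B_1,…,B_q be strictly positive and a_1,…,a_p, b_1,…,b_q be nonnegative reals with μ = Σ_{j=1}^q b_j − Σ_{k=1}^p a_k + (p−q)/2 > 0, and set W(x) = ∏_{i=1}^p Γ(A_i x + a_i) / ∏_{j=1}^q Γ(B_j x + b_j), ρ = ∏_{k=1}^p A_k^{A_k} · ∏_{j=1}^q B_j^{−B_j}, γ = −min_{1≤k≤p}(a_k/A_k). For c > γ and 0 < u < ρ define H(u) = lim_{R→∞} (1/(2π)) ∫_{−R}^{R} [∏_{k=1}^p Γ(A_k(c+it)+a_k) / ∏_{j=1}^q Γ(B_j(c+it)+b_j)] · u^{−(c+it)} dt (a real number independent of c). If W is logarithmically completely monotonic on (0,∞), then W(x) = ∫_{log(1/ρ)}^∞ e^{−tx} H(e^{−t}) dt for all x > 0, and H(u) ≥ 0 for all u ∈ (0,ρ). -/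

import Mathlib

open MeasureTheory Filter

/-- A function `f` is completely monotonic on `(0,∞)` if it is infinitely
differentiable there and `(-1)^n f^(n)(x) ≥ 0` for all `n ≥ 0` and `x > 0`. -/
def CompletelyMonotonicOn (f : ℝ → ℝ) : Prop :=
  (∀ x > (0 : ℝ), ContDiffAt ℝ (⊤ : ℕ∞) f x) ∧
    ∀ (n : ℕ), ∀ x > (0 : ℝ), 0 ≤ (-1 : ℝ) ^ n * iteratedDeriv n f x

/-- A positive function `f` on `(0,∞)` is logarithmically completely monotonic
if `-(log f)'` is completely monotonic on `(0,∞)`. -/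
def LogCompletelyMonotonic (f : ℝ → ℝ) : Prop :=
  (∀ x > (0 : ℝ), 0 < f x) ∧
    CompletelyMonotonicOn (fun x => -deriv (fun y => Real.log (f y)) x)

/-- Laplace transform on the half line. -/
noncomputable def Lap (φ : ℝ → ℝ) (x : ℝ) : ℝ := ∫ t in Set.Ioi (0:ℝ), Real.exp (-(x * t)) * φ t

/-- Absolute convergence of the Laplace transform for all `x > 0`. -/
def LapOK (φ : ℝ → ℝ) : Prop :=
  ∀ x : ℝ, 0 < x → IntegrableOn (fun t => Real.exp (-(x * t)) * φ t) (Set.Ioi 0)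

lemma lapOK_one : LapOK (fun _ => 1) := by
  intro x hx
  have := integrableOn_exp_mul_Ioi (a := -x) (by linarith) 0
  refine this.congr_fun (fun t _ => ?_) measurableSet_Ioi
  simp

lemma lapOK_of_bounded {φ : ℝ → ℝ} {M : ℝ} (hc : ContinuousOn φ (Set.Ioi 0))
    (hb : ∀ t > 0, |φ t| ≤ M) : LapOK φ := by
  intro x hx
  have h1 : IntegrableOn (fun t => M * (Real.exp (-(x * t)) * 1)) (Set.Ioi (0:ℝ)) :=
    (lapOK_one x hx).const_mul M
  refine Integrable.mono' h1 ?_ ?_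
  · refine ContinuousOn.aestronglyMeasurable ?_ measurableSet_Ioi
    exact ContinuousOn.mul (by fun_prop) hc
  · filter_upwards [ae_restrict_mem measurableSet_Ioi] with t ht
    rw [Real.norm_eq_abs, abs_mul, Real.abs_exp]
    have := hb t ht
    have := Real.exp_pos (-(x*t))
    nlinarith

lemma t_exp_le {x t : ℝ} (hx : 0 < x) : t * Real.exp (-(x * t)) ≤ (2 / x) * Real.exp (-(x / 2 * t)) := by
  have h1 : Real.exp (-(x * t)) = Real.exp (-(x/2*t)) * Real.exp (-(x / 2 * t)) := by
    rw [← Real.exp_add]; ring_nf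
  rw [h1, ← mul_assoc]
  refine mul_le_mul_of_nonneg_right ?_ (Real.exp_pos _).le
  rw [Real.exp_neg, ← div_eq_mul_inv, div_le_div_iff₀ (Real.exp_pos _) hx]
  have := Real.add_one_le_exp (x/2*t)
  linarith

lemma LapOK.aesm {φ : ℝ → ℝ} (h : LapOK φ) :
    AEStronglyMeasurable φ (volume.restrict (Set.Ioi 0)) := by
  have h1 := (h 1 one_pos).aestronglyMeasurable
  have h2 : AEStronglyMeasurable (fun t : ℝ => Real.exp (1 * t)) (volume.restrict (Set.Ioi 0)) :=
    Continuous.aestronglyMeasurable (by fun_prop)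
  refine (h2.mul h1).congr ?_
  refine Eventually.of_forall (fun t => ?_)
  simp only [Pi.mul_apply]
  rw [← mul_assoc, ← Real.exp_add]; simp

lemma LapOK.mul_t {φ : ℝ → ℝ} (h : LapOK φ) : LapOK (fun t => t * φ t) := by
  intro x hx
  refine Integrable.mono' (((h (x/2) (by linarith)).norm).const_mul (2/x)) ?_ ?_
  · have := h.aesm
    refine AEStronglyMeasurable.mul (Continuous.aestronglyMeasurable (by fun_prop)) ?_
    exact AEStronglyMeasurable.mul (Continuous.aestronglyMeasurable (by fun_prop)) this
  · filter_upwards [ae_restrict_mem measurableSet_Ioi] with t ht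
    have ht : 0 < t := ht
    rw [norm_mul, norm_mul, norm_mul, Real.norm_eq_abs, Real.norm_eq_abs, Real.norm_eq_abs,
      Real.norm_eq_abs, Real.abs_exp, Real.abs_exp, abs_of_pos ht]
    have := mul_le_mul_of_nonneg_right (t_exp_le (t := t) hx) (abs_nonneg (φ t))
    linarith

lemma LapOK.pow_mul {φ : ℝ → ℝ} (h : LapOK φ) (n : ℕ) : LapOK (fun t => t ^ n * φ t) := by
  induction n with
  | zero => simpa using h
  | succ n ih =>
    have := ih.mul_t
    convert this using 2
    ring

lemma LapOK.const_mul {φ : ℝ → ℝ} (h : LapOK φ) (c : ℝ) : LapOK (fun t => c * φ t) := by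
  intro x hx
  have := (h x hx).const_mul c
  refine this.congr (Eventually.of_forall (fun t => ?_))
  simp only []; ring

lemma LapOK.add {φ ψ : ℝ → ℝ} (h : LapOK φ) (h' : LapOK ψ) : LapOK (fun t => φ t + ψ t) := by
  intro x hx
  have := (h x hx).add (h' x hx)
  refine this.congr (Eventually.of_forall (fun t => ?_))
  simp only [Pi.add_apply]; ring

lemma LapOK.sub {φ ψ : ℝ → ℝ} (h : LapOK φ) (h' : LapOK ψ) : LapOK (fun t => φ t - ψ t) := by
  intro x hx
  have := (h x hx).sub (h' x hx)
  refine this.congr (Eventually.of_forall (fun t => ?_))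
  simp only [Pi.sub_apply]; ring

lemma Lap_add {φ ψ : ℝ → ℝ} (h : LapOK φ) (h' : LapOK ψ) {x : ℝ} (hx : 0 < x) :
    Lap (fun t => φ t + ψ t) x = Lap φ x + Lap ψ x := by
  unfold Lap
  rw [← integral_add (h x hx) (h' x hx)]
  congr 1; ext t; ring

lemma Lap_sub {φ ψ : ℝ → ℝ} (h : LapOK φ) (h' : LapOK ψ) {x : ℝ} (hx : 0 < x) :
    Lap (fun t => φ t - ψ t) x = Lap φ x - Lap ψ x := by
  unfold Lap
  rw [← integral_sub (h x hx) (h' x hx)]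
  congr 1; ext t; ring

lemma Lap_const_mul {φ : ℝ → ℝ} (c x : ℝ) :
    Lap (fun t => c * φ t) x = c * Lap φ x := by
  unfold Lap
  rw [← integral_const_mul]
  congr 1; ext t; ring

lemma Lap_congr {φ ψ : ℝ → ℝ} (h : ∀ t > 0, φ t = ψ t) (x : ℝ) : Lap φ x = Lap ψ x := by
  unfold Lap
  refine setIntegral_congr_fun measurableSet_Ioi (fun t ht => ?_)
  simp only [h t ht]

lemma LapOK.congr {φ ψ : ℝ → ℝ} (h : LapOK φ) (h' : ∀ t > 0, φ t = ψ t) : LapOK ψ := by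
  intro x hx
  refine (h x hx).congr_fun (fun t ht => ?_) measurableSet_Ioi
  simp only [h' t ht]

lemma Lap_exp {a x : ℝ} (hx : 0 < x + a) : Lap (fun t => Real.exp (-(a * t))) x = 1 / (x + a) := by
  unfold Lap
  have := integral_exp_mul_Ioi (a := -(x+a)) (by linarith) 0
  simp only [mul_zero, Real.exp_zero] at this
  rw [neg_div_neg_eq] at this
  rw [← this]
  congr 1; ext t; rw [← Real.exp_add]; ring_nf

lemma Lap_one {x : ℝ} (hx : 0 < x) : Lap (fun _ => 1) x = 1 / x := by
  have := Lap_exp (a := 0) (x := x) (by linarith)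
  simpa using this

/-- complex Laplace transform is holomorphic in the right half plane -/
lemma LapC_hasDerivAt {φ : ℝ → ℝ} (h : LapOK φ) {z : ℂ} (hz : 0 < z.re) :
    HasDerivAt (fun z : ℂ => ∫ t in Set.Ioi (0:ℝ), Complex.exp (-(z * t)) * (φ t : ℂ))
      (∫ t in Set.Ioi (0:ℝ), -(t : ℂ) * Complex.exp (-(z * t)) * (φ t : ℂ)) z := by
  have hs : {w : ℂ | z.re / 2 < w.re} ∈ nhds z :=
    (isOpen_lt continuous_const Complex.continuous_re).mem_nhds (by simp; linarith)
  have hm : AEStronglyMeasurable (fun t => (φ t : ℂ)) (volume.restrict (Set.Ioi 0)) :=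
    Complex.continuous_ofReal.comp_aestronglyMeasurable h.aesm
  have hnorm : ∀ (w : ℂ) (t : ℝ), ‖Complex.exp (-(w * t))‖ = Real.exp (-(w.re * t)) := by
    intro w t; rw [Complex.norm_exp]; simp
  refine (hasDerivAt_integral_of_dominated_loc_of_deriv_le
    (F := fun (z : ℂ) (t : ℝ) => Complex.exp (-(z * t)) * (φ t : ℂ))
    (F' := fun (z : ℂ) (t : ℝ) => -(t : ℂ) * Complex.exp (-(z * t)) * (φ t : ℂ))
    (bound := fun t => ‖Real.exp (-(z.re/2 * t)) * (t * φ t)‖) hs ?_ ?_ ?_ ?_ ?_ ?_).2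
  · refine Eventually.of_forall (fun w => ?_)
    exact AEStronglyMeasurable.mul (Continuous.aestronglyMeasurable (by fun_prop)) hm
  · refine Integrable.mono' (h z.re hz).norm
      (AEStronglyMeasurable.mul (Continuous.aestronglyMeasurable (by fun_prop)) hm) ?_
    refine Eventually.of_forall (fun t => ?_)
    rw [norm_mul, hnorm, norm_mul, Real.norm_eq_abs, Real.abs_exp, Complex.norm_real]
  · exact AEStronglyMeasurable.mul (Continuous.aestronglyMeasurable (by fun_prop)) hm
  · filter_upwards [ae_restrict_mem measurableSet_Ioi] with t ht w hw
    have ht : 0 < t := ht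
    rw [norm_mul, norm_mul, hnorm, norm_neg, Complex.norm_real, Complex.norm_real, norm_mul, norm_mul,
      Real.norm_eq_abs (Real.exp _), Real.abs_exp]
    have : Real.exp (-(w.re * t)) ≤ Real.exp (-(z.re/2*t)) := by
      apply Real.exp_le_exp.2
      have hw : z.re/2 < w.re := hw
      nlinarith
    have h3 := mul_le_mul_of_nonneg_right this (mul_nonneg (norm_nonneg t) (norm_nonneg (φ t)))
    linarith
  · exact (h.mul_t (z.re/2) (by linarith)).norm
  · refine Eventually.of_forall (fun t w _ => ?_)
    have h1 : HasDerivAt (fun w : ℂ => -(w * t)) (-(t:ℂ)) w := by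
      simpa using ((hasDerivAt_id w).mul_const (t:ℂ)).fun_neg
    have h2 := (h1.cexp).mul_const (φ t : ℂ)
    refine h2.congr_deriv ?_
    ring

lemma LapC_ofReal (φ : ℝ → ℝ) (x : ℝ) :
    ∫ t in Set.Ioi (0:ℝ), Complex.exp (-((x:ℂ) * t)) * (φ t : ℂ) = (Lap φ x : ℂ) := by
  unfold Lap
  rw [← integral_complex_ofReal]
  congr 1; ext t; push_cast; ring

lemma Lap_hasDerivAt {φ : ℝ → ℝ} (h : LapOK φ) {x : ℝ} (hx : 0 < x) :
    HasDerivAt (Lap φ) (-Lap (fun t => t * φ t) x) x := by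
  have h1 := (LapC_hasDerivAt h (z := (x:ℂ)) (by simpa using hx)).real_of_complex
  convert h1 using 1
  · ext y; rw [LapC_ofReal]; simp
  · have : ∫ t in Set.Ioi (0:ℝ), -(t : ℂ) * Complex.exp (-((x:ℂ) * t)) * (φ t : ℂ)
        = ((-Lap (fun t => t * φ t) x : ℝ) : ℂ) := by
      rw [Complex.ofReal_neg, ← LapC_ofReal, ← integral_neg]
      congr 1; ext t; push_cast; ring
    rw [this]; simp

lemma Lap_iteratedDeriv {φ : ℝ → ℝ} (h : LapOK φ) (n : ℕ) {x : ℝ} (hx : 0 < x) :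
    iteratedDeriv n (Lap φ) x = (-1) ^ n * Lap (fun t => t ^ n * φ t) x := by
  induction n generalizing x with
  | zero => simp
  | succ n ih =>
    rw [iteratedDeriv_succ]
    have h1 : iteratedDeriv n (Lap φ) =ᶠ[nhds x] fun y => (-1) ^ n * Lap (fun t => t ^ n * φ t) y := by
      filter_upwards [Ioi_mem_nhds hx] with y hy using ih hy
    rw [h1.deriv_eq, ((Lap_hasDerivAt (h.pow_mul n) hx).const_mul _).deriv]
    have : (fun t : ℝ => t * (t ^ n * φ t)) = fun t => t ^ (n+1) * φ t := by ext t; ring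
    rw [this]; ring

lemma Lap_contDiffAt {φ : ℝ → ℝ} (h : LapOK φ) {x : ℝ} (hx : 0 < x) :
    AnalyticAt ℝ (Lap φ) x := by
  have hd : DifferentiableOn ℂ (fun z : ℂ => ∫ t in Set.Ioi (0:ℝ), Complex.exp (-(z * t)) * (φ t : ℂ))
      {z : ℂ | 0 < z.re} := fun z hz =>
    (LapC_hasDerivAt h hz).differentiableAt.differentiableWithinAt
  have ha := hd.analyticAt (z := (x:ℂ))
    ((isOpen_lt continuous_const Complex.continuous_re).mem_nhds (by simpa using hx))
  have := ha.re_ofReal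
  refine this.congr (Eventually.of_forall (fun y => ?_))
  simp only []
  rw [LapC_ofReal]; simp

lemma Lap_tendsto {φ : ℝ → ℝ} (h : LapOK φ) : Tendsto (Lap φ) atTop (nhds 0) := by
  suffices Tendsto (fun x => ∫ t in Set.Ioi (0:ℝ), Real.exp (-(x * t)) * φ t) atTop
      (nhds (∫ t in Set.Ioi (0:ℝ), (0:ℝ))) by
    rw [integral_zero] at this; exact this
  refine tendsto_integral_filter_of_dominated_convergence
    (fun t => ‖Real.exp (-(1 * t)) * φ t‖) ?_ ?_ (h 1 one_pos).norm ?_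
  · filter_upwards [eventually_gt_atTop 0] with x hx using (h x hx).aestronglyMeasurable
  · filter_upwards [eventually_ge_atTop 1] with x hx
    filter_upwards [ae_restrict_mem measurableSet_Ioi] with t ht
    have ht : 0 < t := ht
    rw [norm_mul, norm_mul, Real.norm_eq_abs (Real.exp _), Real.norm_eq_abs (Real.exp _),
      Real.abs_exp, Real.abs_exp]
    refine mul_le_mul_of_nonneg_right (Real.exp_le_exp.2 (by nlinarith)) (norm_nonneg _)
  · filter_upwards [ae_restrict_mem measurableSet_Ioi] with t ht
    have ht : 0 < t := ht
    have h1 : Tendsto (fun x : ℝ => Real.exp (-(x * t))) atTop (nhds 0) :=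
      Real.tendsto_exp_neg_atTop_nhds_zero.comp (tendsto_id.atTop_mul_const ht)
    simpa using h1.mul_const (φ t)

lemma w_deriv (s t : ℝ) : HasDerivAt (fun t : ℝ => t * Real.exp (-(t / s)))
    (Real.exp (-(t/s)) * (1 - t / s)) t := by
  have h1 : HasDerivAt (fun t : ℝ => -(t / s)) (-(1/s)) t := ((hasDerivAt_id t).div_const s).neg
  refine ((hasDerivAt_id' t).mul h1.exp).congr_deriv ?_
  ring

lemma w_mono {s : ℝ} (hs : 0 < s) : StrictMonoOn (fun t : ℝ => t * Real.exp (-(t / s))) (Set.Iic s) := by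
  refine strictMonoOn_of_deriv_pos (convex_Iic s) (by fun_prop) (fun t ht => ?_)
  rw [interior_Iic] at ht
  have ht : t < s := ht
  rw [(w_deriv s t).deriv]
  have : t / s < 1 := (div_lt_one hs).2 ht
  exact mul_pos (Real.exp_pos _) (by linarith)

lemma w_anti {s : ℝ} (hs : 0 < s) : StrictAntiOn (fun t : ℝ => t * Real.exp (-(t / s))) (Set.Ici s) := by
  refine strictAntiOn_of_deriv_neg (convex_Ici s) (by fun_prop) (fun t ht => ?_)
  rw [interior_Ici] at ht
  have ht : s < t := ht
  rw [(w_deriv s t).deriv]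
  have : 1 < t / s := (one_lt_div hs).2 ht
  exact mul_neg_of_pos_of_neg (Real.exp_pos _) (by linarith)

/-- Post-Widder type positivity. -/
lemma post_widder {φ : ℝ → ℝ} (h : LapOK φ) (hc : ContinuousOn φ (Set.Ioi 0))
    (hpos : ∀ n : ℕ, 1 ≤ n → ∀ x > 0, 0 ≤ Lap (fun t => t ^ n * φ t) x) :
    ∀ s > 0, 0 ≤ φ s := by
  intro s hs
  by_contra hneg
  push Not at hneg
  set w : ℝ → ℝ := fun t => t * Real.exp (-(t / s)) with hw
  have hwc : Continuous w := by fun_prop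
  have hwpos : ∀ t > 0, 0 < w t := fun t ht => mul_pos ht (Real.exp_pos _)
  set η : ℝ := -φ s / 2 with hη
  have hηpos : 0 < η := by rw [hη]; linarith
  have hcs : ContinuousAt φ s := hc.continuousAt (Ioi_mem_nhds hs)
  have hev : ∀ᶠ t in nhds s, φ t < -η := hcs.eventually_lt_const (by rw [hη]; linarith)
  obtain ⟨δ0, hδ0, hball⟩ := Metric.eventually_nhds_iff.1 hev
  set δ : ℝ := min (δ0 / 2) (s / 2) with hδ
  have hδpos : 0 < δ := by rw [hδ]; positivity
  have hδ1 : δ ≤ δ0 / 2 := min_le_left _ _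
  have hδ2 : δ ≤ s / 2 := min_le_right _ _
  have hin : ∀ t, |t - s| ≤ δ → φ t < -η := fun t ht =>
    hball (by rw [Real.dist_eq]; linarith)
  set θ : ℝ := max (w (s - δ)) (w (s + δ)) with hθ
  have hθpos : 0 < θ := lt_max_of_lt_left (hwpos _ (by linarith))
  have hθlt : θ < w s := by
    refine max_lt ?_ ?_
    · exact w_mono hs (by simp; linarith) (by simp) (by linarith)
    · exact w_anti hs (by simp) (by simp; linarith) (by linarith)
  have hout : ∀ t > 0, δ < |t - s| → w t ≤ θ := by
    intro t ht hts
    rcases lt_abs.1 hts with h1 | h1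
    · refine le_max_of_le_right ((w_anti hs).antitoneOn ?_ ?_ ?_)
      · simp; linarith
      · simp; linarith
      · linarith
    · refine le_max_of_le_left ((w_mono hs).monotoneOn ?_ ?_ ?_)
      · simp; linarith
      · simp; linarith
      · linarith
  set θ' : ℝ := (θ + w s) / 2 with hθ'
  have hθθ' : θ < θ' := by rw [hθ']; linarith
  have hev2 : ∀ᶠ t in nhds s, θ' < w t :=
    (hwc.continuousAt (x := s)).eventually_const_lt (by rw [hθ']; linarith)
  obtain ⟨δ1, hδ1pos, hball2⟩ := Metric.eventually_nhds_iff.1 hev2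
  set δ' : ℝ := min (δ1 / 2) δ with hδ'
  have hδ'pos : 0 < δ' := by rw [hδ']; positivity
  have hδ'1 : δ' ≤ δ1 / 2 := min_le_left _ _
  have hδ'2 : δ' ≤ δ := min_le_right _ _
  set I' : Set ℝ := Set.Icc (s - δ') (s + δ') with hI'
  have hI'sub : I' ⊆ Set.Ioi 0 := fun t ht => by
    have := ht.1
    simp only [Set.mem_Ioi]; linarith
  set K : ℝ := ∫ t in Set.Ioi (0:ℝ), w t * |φ t| with hK
  have hKi : IntegrableOn (fun t => w t * |φ t|) (Set.Ioi 0) := by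
    refine ((h.mul_t (1/s) (by positivity)).norm).congr ?_
    filter_upwards [ae_restrict_mem measurableSet_Ioi] with t ht
    have ht : 0 < t := ht
    rw [norm_mul, norm_mul, Real.norm_eq_abs, Real.norm_eq_abs, Real.norm_eq_abs, Real.abs_exp,
      abs_of_pos ht, hw]
    simp only []
    rw [show 1 / s * t = t / s by ring]; ring
  have key : ∀ n : ℕ, η * θ' ^ (n+1) * (2 * δ') ≤ θ ^ n * K := by
    intro n
    have h0 := hpos (n+1) (by omega) ((n+1 : ℕ) / s) (by positivity)
    have hle : Lap (fun t => t ^ (n+1) * φ t) ((n+1 : ℕ) / s) ≤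
        ∫ t in Set.Ioi (0:ℝ), (I'.indicator (fun _ => -(η * θ' ^ (n+1))) t + θ ^ n * (w t * |φ t|)) := by
      unfold Lap
      refine setIntegral_mono_on (h.pow_mul (n+1) _ (by positivity)) ?_ measurableSet_Ioi ?_
      · refine Integrable.add ?_ (hKi.const_mul _)
        refine IntegrableOn.integrable_indicator ?_ measurableSet_Icc
        refine integrableOn_const ?_ 
        refine ((Measure.restrict_apply_le _ _).trans_lt ?_).ne
        exact measure_Icc_lt_top
      · intro t ht
        have ht : 0 < t := ht
        have hwn : Real.exp (-((n+1 : ℕ) / s * t)) * (t ^ (n+1) * φ t) = w t ^ (n+1) * φ t := by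
          rw [hw]; simp only []
          rw [mul_pow, ← Real.exp_nat_mul]
          have : -((n+1 : ℕ) / s * t) = ((n+1:ℕ):ℝ) * -(t/s) := by ring
          rw [this]; ring
        rw [hwn]
        have hwt := hwpos t ht
        by_cases h1 : t ∈ I'
        · rw [Set.indicator_of_mem h1]
          have habs : |t - s| ≤ δ' := abs_le.2 ⟨by linarith [h1.1], by linarith [h1.2]⟩
          have hφ := hin t (habs.trans hδ'2)
          have hwθ : θ' < w t := hball2 (by rw [Real.dist_eq]; linarith)
          have hp : θ' ^ (n+1) ≤ w t ^ (n+1) := pow_le_pow_left₀ (by linarith) hwθ.le _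
          have hp0 : 0 < w t ^ (n+1) := by positivity
          have : 0 ≤ θ ^ n * (w t * |φ t|) := by positivity
          nlinarith
        · rw [Set.indicator_of_notMem h1, zero_add]
          by_cases h2 : |t - s| ≤ δ
          · have hφ := hin t h2
            have : 0 ≤ θ ^ n * (w t * |φ t|) := by positivity
            have hp0 : 0 < w t ^ (n+1) := by positivity
            nlinarith
          · push Not at h2
            have h3 := hout t ht h2
            have hp : w t ^ n ≤ θ ^ n := pow_le_pow_left₀ hwt.le h3 _
            calc w t ^ (n+1) * φ t ≤ w t ^ (n+1) * |φ t| :=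
                  mul_le_mul_of_nonneg_left (le_abs_self _) (by positivity)
              _ = w t ^ n * (w t * |φ t|) := by ring
              _ ≤ θ ^ n * (w t * |φ t|) := mul_le_mul_of_nonneg_right hp (by positivity)
    have hInt : ∫ t in Set.Ioi (0:ℝ), (I'.indicator (fun _ => -(η * θ' ^ (n+1))) t + θ ^ n * (w t * |φ t|))
        = -(η * θ' ^ (n+1)) * (2 * δ') + θ ^ n * K := by
      rw [integral_add, integral_const_mul, integral_indicator measurableSet_Icc,
        Measure.restrict_restrict measurableSet_Icc, Set.inter_eq_left.2 hI'sub, setIntegral_const]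
      · simp only [hI', measureReal_def, Real.volume_Icc]
        rw [ENNReal.toReal_ofReal (by linarith)]
        simp only [smul_eq_mul]; ring
      · refine IntegrableOn.integrable_indicator ?_ measurableSet_Icc
        refine integrableOn_const ?_ 
        refine ((Measure.restrict_apply_le _ _).trans_lt ?_).ne
        exact measure_Icc_lt_top
      · exact hKi.const_mul _
    rw [hInt] at hle
    linarith
  have hlim : Tendsto (fun n : ℕ => (θ' / θ) ^ n) atTop atTop :=
    tendsto_pow_atTop_atTop_of_one_lt ((one_lt_div hθpos).2 hθθ')
  obtain ⟨n, hn⟩ := (hlim.eventually_gt_atTop (K / (η * θ' * (2 * δ')))).exists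
  have hθ'pos : 0 < θ' := hθpos.trans hθθ'
  have := key n
  rw [div_lt_iff₀ (by positivity), div_pow, div_mul_eq_mul_div, lt_div_iff₀ (by positivity)] at hn
  have e : θ' ^ (n+1) = θ' ^ n * θ' := pow_succ _ _
  rw [e] at this
  nlinarith

noncomputable def binB (a t : ℝ) : ℝ := (Real.exp (-(a * t)) / (1 - Real.exp (-t)) - 1 / t - 1 / 2 + a) / t

lemma one_sub_exp_pos {t : ℝ} (ht : 0 < t) : 0 < 1 - Real.exp (-t) := by
  have : Real.exp (-t) < 1 := Real.exp_lt_one_iff.2 (by linarith)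
  linarith

lemma exp_second {x : ℝ} (hx : 0 ≤ x) : |Real.exp (-x) - 1 + x| ≤ x ^ 2 := by
  rcases le_or_gt x 1 with h | h
  · have := Real.abs_exp_sub_one_sub_id_le (x := -x) (by rw [abs_neg, abs_of_nonneg hx]; exact h)
    rw [neg_sq] at this
    convert this using 2; ring
  · have h1 := Real.exp_pos (-x)
    have h2 : Real.exp (-x) < 1 := Real.exp_lt_one_iff.2 (by linarith)
    rw [abs_le]; constructor <;> nlinarith

lemma exp_third {x : ℝ} (hx : 0 ≤ x) : |Real.exp (-x) - 1 + x - x ^ 2 / 2| ≤ x ^ 3 := by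
  rcases le_or_gt x 1 with h | h
  · have := Real.exp_bound (x := -x) (by rw [abs_neg, abs_of_nonneg hx]; exact h) (n := 3) (by norm_num)
    simp only [Finset.sum_range_succ, Finset.sum_range_zero, abs_neg, abs_of_nonneg hx] at this
    norm_num [Nat.factorial] at this
    have e : Real.exp (-x) - 1 + x - x ^ 2 / 2 = Real.exp (-x) - (1 + -x + x ^ 2 / 2) := by ring
    rw [e]
    refine this.trans ?_
    have : 0 ≤ x^3 := by positivity
    linarith
  · have h1 := Real.exp_pos (-x)
    have h2 : Real.exp (-x) < 1 := Real.exp_lt_one_iff.2 (by linarith)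
    have h3 : x ^ 2 ≤ x ^ 3 := by nlinarith [sq_nonneg x]
    rw [abs_le]; constructor <;> nlinarith

lemma binB_cont (a : ℝ) : ContinuousOn (binB a) (Set.Ioi 0) := by
  unfold binB
  have h1 : ∀ t ∈ Set.Ioi (0:ℝ), t ≠ 0 := fun t ht => ne_of_gt ht
  have h2 : ∀ t ∈ Set.Ioi (0:ℝ), 1 - Real.exp (-t) ≠ 0 := fun t ht => (one_sub_exp_pos ht).ne'
  refine ContinuousOn.div ?_ continuousOn_id h1
  refine ContinuousOn.add (ContinuousOn.sub (ContinuousOn.sub ?_ ?_) continuousOn_const) continuousOn_const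
  · exact ContinuousOn.div (by fun_prop) (by fun_prop) h2
  · exact ContinuousOn.div (by fun_prop) continuousOn_id h1

lemma binB_bdd {a : ℝ} (ha : 0 ≤ a) : ∃ M, ∀ t > 0, |binB a t| ≤ M := by
  refine ⟨max (2 + 1 + 1/2 + a) (3 * (a ^ 2 + (1 + 1/2 + a) + (1/2 + a) / 2)), fun t ht => ?_⟩
  have hE := one_sub_exp_pos ht
  rcases le_or_gt 1 t with h | h
  · refine le_max_of_le_left ?_
    unfold binB
    rw [abs_div, abs_of_pos ht, div_le_iff₀ ht]
    have h1 : Real.exp (-(a*t)) ≤ 1 := Real.exp_le_one_iff.2 (by nlinarith)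
    have h2 : Real.exp (-t) ≤ 1/2 := by
      have := Real.add_one_le_exp t
      rw [Real.exp_neg, inv_eq_one_div]
      exact one_div_le_one_div_of_le (by norm_num) (by linarith)
    have h3 : Real.exp (-(a*t)) / (1 - Real.exp (-t)) ≤ 2 := by
      rw [div_le_iff₀ hE]; linarith
    have h4 : 0 ≤ Real.exp (-(a*t)) / (1 - Real.exp (-t)) := by positivity
    have h5 : 1 / t ≤ 1 := by rw [div_le_one ht]; exact h
    have h6 : 0 < 1 / t := by positivity
    have : |Real.exp (-(a*t)) / (1 - Real.exp (-t)) - 1/t - 1/2 + a| ≤ 2 + 1 + 1/2 + a := by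
      rw [abs_le]; constructor <;> linarith
    nlinarith
  · refine le_max_of_le_right ?_
    have hD : t / 3 ≤ 1 - Real.exp (-t) := by
      have := abs_le.1 (exp_third ht.le)
      have h0 := Real.add_one_le_exp t
      have h1 : Real.exp (-t) ≤ 1 / (1 + t) := by
        rw [Real.exp_neg, inv_eq_one_div]
        exact one_div_le_one_div_of_le (by linarith) (by linarith)
      have h2 : 1 / (1 + t) ≤ 1 - t / 3 := by
        rw [div_le_iff₀ (by linarith)]; nlinarith
      linarith
    have e : binB a t = (t * (Real.exp (-(a*t)) - 1 + a * t)
        + (Real.exp (-t) - 1 + t - t ^ 2 / 2) * (1 + (1/2 - a) * t) + (1/2 - a) * t ^ 3 / 2)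
        / (t ^ 2 * (1 - Real.exp (-t))) := by
      unfold binB
      have h1 := hE.ne'
      field_simp
      ring
    rw [e, abs_div, abs_of_pos (a := t ^ 2 * (1 - Real.exp (-t))) (by positivity),
      div_le_iff₀ (by positivity)]
    have hat : 0 ≤ a * t := by positivity
    have b1 := exp_second hat
    have b2 := exp_third ht.le
    have b3 : |1 + (1/2 - a) * t| ≤ 1 + 1/2 + a := by
      rw [abs_le]; constructor <;> nlinarith
    have b4 : |(1/2 - a) * t ^ 3 / 2| ≤ (1/2 + a) / 2 * t ^ 3 := by
      have : 0 < t^3 := by positivity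
      rw [abs_le]; constructor <;> nlinarith
    calc _ ≤ |t * (Real.exp (-(a*t)) - 1 + a * t)|
        + |(Real.exp (-t) - 1 + t - t ^ 2 / 2) * (1 + (1/2 - a) * t)| + |(1/2 - a) * t ^ 3 / 2| :=
          abs_add_three _ _ _
      _ ≤ t * (a * t) ^ 2 + t ^ 3 * (1 + 1/2 + a) + (1/2 + a) / 2 * t ^ 3 := by
          rw [abs_mul, abs_mul, abs_of_pos ht]
          gcongr
      _ = (3 * (a ^ 2 + (1 + 1/2 + a) + (1/2 + a) / 2)) * (t ^ 2 * (t / 3)) := by ring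
      _ ≤ _ := by gcongr

lemma binB_ok {a : ℝ} (ha : 0 ≤ a) : LapOK (binB a) := by
  obtain ⟨M, hM⟩ := binB_bdd ha
  exact lapOK_of_bounded (binB_cont a) hM

lemma eq_of_deriv {F G F' : ℝ → ℝ} (hF : ∀ x > 0, HasDerivAt F (F' x) x)
    (hG : ∀ x > 0, HasDerivAt G (F' x) x) (h0 : Tendsto F atTop (nhds 0))
    (h1 : Tendsto G atTop (nhds 0)) : ∀ x > 0, F x = G x := by
  intro x hx
  have hd : ∀ y > 0, HasDerivAt (fun y => F y - G y) 0 y := fun y hy => by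
    simpa using (hF y hy).fun_sub (hG y hy)
  have hc : ∀ y ≥ x, F y - G y = F x - G x := by
    intro y hy
    refine (convex_Ioi (0:ℝ)).is_const_of_fderivWithin_eq_zero (𝕜 := ℝ) (f := fun y => F y - G y)
      (fun z hz => (hd z hz).differentiableAt.differentiableWithinAt) (fun z hz => ?_)
      (lt_of_lt_of_le hx hy) hx
    rw [fderivWithin_of_isOpen isOpen_Ioi hz]
    have := (hd z hz).hasFDerivAt.fderiv
    rw [this]; ext; simp
  have hl : Tendsto (fun y => F y - G y) atTop (nhds 0) := by simpa using h0.sub h1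
  have hl2 : Tendsto (fun y => F y - G y) atTop (nhds (F x - G x)) :=
    tendsto_const_nhds.congr' (by filter_upwards [eventually_ge_atTop x] with y hy using (hc y hy).symm)
  have := tendsto_nhds_unique hl hl2
  linarith

lemma log_ratio_tendsto (b : ℝ) : Tendsto (fun z : ℝ => Real.log (z + b) - Real.log z) atTop (nhds 0) := by
  have h : Tendsto (fun z : ℝ => Real.log (1 + b / z)) atTop (nhds (Real.log (1 + 0))) := by
    refine Tendsto.log ?_ (by norm_num)
    exact tendsto_const_nhds.add (tendsto_const_nhds.div_atTop tendsto_id)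
  simp only [add_zero, Real.log_one] at h
  refine h.congr' ?_
  filter_upwards [eventually_gt_atTop 0, eventually_gt_atTop (-b)] with z hz hz2
  rw [← Real.log_div (by linarith) hz.ne']
  congr 1; field_simp

lemma z_log_ratio_tendsto (b : ℝ) :
    Tendsto (fun z : ℝ => z * (Real.log (z + b) - Real.log z)) atTop (nhds b) := by
  refine (Real.tendsto_mul_log_one_add_div_atTop b).congr' ?_
  filter_upwards [eventually_gt_atTop 0, eventually_gt_atTop (-b)] with z hz hz2
  rw [← Real.log_div (by linarith) hz.ne']
  congr 2; field_simp

noncomputable def fr (t : ℝ) : ℝ := (1 - Real.exp (-t)) / t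

lemma fr_ok : LapOK fr := by
  refine lapOK_of_bounded (M := 1) ?_ ?_
  · exact ContinuousOn.div (by fun_prop) continuousOn_id (fun t ht => ne_of_gt ht)
  · intro t ht
    unfold fr
    rw [abs_div, abs_of_pos ht, abs_of_pos (one_sub_exp_pos ht), div_le_one ht]
    have := Real.add_one_le_exp (-t)
    linarith

lemma lap_one_sub_exp {z : ℝ} (hz : 0 < z) :
    Lap (fun t => 1 - Real.exp (-t)) z = 1 / z - 1 / (z + 1) := by
  have h1 : LapOK (fun t => Real.exp (-t)) :=
    lapOK_of_bounded (M := 1) (by fun_prop) (fun t ht => by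
      rw [Real.abs_exp]; exact Real.exp_le_one_iff.2 (by linarith))
  rw [Lap_sub lapOK_one h1 hz, Lap_one hz]
  have := Lap_exp (a := 1) (x := z) (by linarith)
  simp only [one_mul] at this
  rw [this]

lemma lap_fr {z : ℝ} (hz : 0 < z) : Lap fr z = Real.log (z + 1) - Real.log z := by
  refine eq_of_deriv (F' := fun z => -(1 / z - 1 / (z+1))) (fun x hx => ?_) (fun x hx => ?_)
    (Lap_tendsto fr_ok) (log_ratio_tendsto 1) z hz
  · refine (Lap_hasDerivAt fr_ok hx).congr_deriv ?_
    rw [← lap_one_sub_exp hx]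
    congr 1
    refine Lap_congr (fun t ht => ?_) x
    unfold fr; field_simp
  · have h1 : HasDerivAt (fun z : ℝ => Real.log (z + 1)) (1 / (x+1)) x :=
      ((hasDerivAt_id' x).add_const 1).log (by linarith)
    refine (h1.fun_sub (Real.hasDerivAt_log hx.ne')).congr_deriv ?_
    rw [inv_eq_one_div]; ring

lemma binB_shift {a : ℝ} (ha : 0 ≤ a) {z : ℝ} (hz : 0 < z) :
    Lap (binB a) z - Lap (binB a) (z + 1) =
      (z + a + 1/2) * Real.log (z + 1) - (z + a - 1/2) * Real.log z - 1 - Real.log (z + a) := by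
  have hok := binB_ok ha
  have hexp : LapOK (fun t => Real.exp (-(a * t))) :=
    lapOK_of_bounded (M := 1) (by fun_prop) (fun t ht => by
      rw [Real.abs_exp]; exact Real.exp_le_one_iff.2 (by have := mul_nonneg ha ht.le; linarith))
  have hose : LapOK (fun t => 1 - Real.exp (-t)) :=
    lapOK_of_bounded (M := 1) (by fun_prop) (fun t ht => by
      rw [abs_of_pos (one_sub_exp_pos ht)]; linarith [Real.exp_pos (-t)])
  refine eq_of_deriv (F := fun z => Lap (binB a) z - Lap (binB a) (z + 1))
    (G := fun z => (z + a + 1/2) * Real.log (z + 1) - (z + a - 1/2) * Real.log z - 1 - Real.log (z + a))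
    (F' := fun z => -(1 / (z + a) - (Real.log (z + 1) - Real.log z) - (1/2 - a) * (1 / z - 1 / (z+1))))
    (fun x hx => ?_) (fun x hx => ?_) ?_ ?_ z hz
  · have h1 : HasDerivAt (fun z => Lap (binB a) (z + 1)) (-Lap (fun t => t * binB a t) (x + 1)) x :=
      (Lap_hasDerivAt hok (x := x + 1) (by linarith)).comp_add_const x 1
    refine ((Lap_hasDerivAt hok hx).fun_sub h1).congr_deriv ?_
    have h2 : Lap (fun t => t * binB a t) x - Lap (fun t => t * binB a t) (x + 1)
        = Lap (fun t => (Real.exp (-(a*t)) - fr t) - (1/2 - a) * (1 - Real.exp (-t))) x := by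
      unfold Lap
      rw [← integral_sub (hok.mul_t x hx) (hok.mul_t (x+1) (by linarith))]
      refine setIntegral_congr_fun measurableSet_Ioi (fun t ht => ?_)
      have ht : 0 < t := ht
      simp only []
      have e : Real.exp (-((x+1)*t)) = Real.exp (-(x*t)) * Real.exp (-t) := by
        rw [← Real.exp_add]; ring_nf
      rw [e]
      unfold binB fr
      have := (one_sub_exp_pos ht).ne'
      field_simp
      ring
    rw [Lap_sub (hexp.sub fr_ok) (hose.const_mul _) hx, Lap_sub hexp fr_ok hx, Lap_const_mul,
      lap_one_sub_exp hx, lap_fr hx, Lap_exp (by linarith)] at h2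
    linarith
  · have h1 : HasDerivAt (fun z : ℝ => Real.log (z + 1)) (1 / (x+1)) x :=
      ((hasDerivAt_id' x).add_const 1).log (by linarith)
    have h2 : HasDerivAt (fun z : ℝ => Real.log (z + a)) (1 / (x+a)) x :=
      ((hasDerivAt_id' x).add_const a).log (by linarith)
    have h3 : HasDerivAt (fun z : ℝ => z + a + 1/2) 1 x := ((hasDerivAt_id' x).add_const a).add_const _
    have h4 : HasDerivAt (fun z : ℝ => z + a - 1/2) 1 x := ((hasDerivAt_id' x).add_const a).sub_const _
    refine ((((h3.fun_mul h1).fun_sub (h4.fun_mul (Real.hasDerivAt_log hx.ne'))).sub_const 1).fun_sub h2).congr_deriv ?_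
    have : x + a ≠ 0 := by linarith
    have : x + 1 ≠ 0 := by linarith
    field_simp
    ring
  · have h1 := Lap_tendsto hok
    have h2 : Tendsto (fun z => Lap (binB a) (z + 1)) atTop (nhds 0) :=
      h1.comp (tendsto_atTop_add_const_right _ _ tendsto_id)
    simpa using h1.sub h2
  · have h1 := z_log_ratio_tendsto 1
    have h2 := (log_ratio_tendsto 1).const_mul (a + 1/2)
    have h3 := log_ratio_tendsto a
    have := ((h1.add h2).sub h3).sub_const 1
    simp only [mul_zero, add_zero, sub_zero, sub_self] at this
    refine this.congr (fun z => ?_)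
    ring

/-- The Stirling main term. -/
noncomputable def stMain (a z : ℝ) : ℝ :=
  (z + a - 1/2) * Real.log z - z + Real.log (2 * Real.pi) / 2

lemma log_factorial_tendsto :
    Tendsto (fun n : ℕ => Real.log (n.factorial) - (n * Real.log n - n + Real.log n / 2
      + Real.log (2 * Real.pi) / 2)) atTop (nhds 0) := by
  have h1 : Tendsto (fun n : ℕ => Real.log (Stirling.stirlingSeq n)) atTop (nhds (Real.log (Real.sqrt Real.pi))) :=
    Stirling.tendsto_stirlingSeq_sqrt_pi.log (by positivity)
  have h2 := h1.sub_const (Real.log (Real.sqrt Real.pi))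
  rw [sub_self] at h2
  refine h2.congr' ?_
  filter_upwards [eventually_gt_atTop 0] with n hn
  have hn' : (0:ℝ) < n := by exact_mod_cast hn
  rw [Stirling.log_stirlingSeq_formula, Real.log_sqrt Real.pi_pos.le,
    Real.log_mul (x := 2) (y := Real.pi) (by norm_num) Real.pi_pos.ne',
    Real.log_mul (by norm_num) hn'.ne', Real.log_div hn'.ne' (Real.exp_pos _).ne', Real.log_exp]
  ring

theorem binet {a : ℝ} (ha : 0 ≤ a) {z : ℝ} (hz : 0 < z) :
    Real.log (Real.Gamma (z + a)) = stMain a z + Lap (binB a) z := by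
  set D : ℝ → ℝ := fun z => Real.log (Real.Gamma (z + a)) - (stMain a z + Lap (binB a) z) with hD
  have hper : ∀ y > 0, D (y + 1) = D y := by
    intro y hy
    have h1 := binB_shift ha hy
    have h2 : Real.Gamma (y + 1 + a) = (y + a) * Real.Gamma (y + a) := by
      rw [← Real.Gamma_add_one (by linarith)]; ring_nf
    rw [hD]
    simp only []
    rw [h2, Real.log_mul (by linarith) (Real.Gamma_pos_of_pos (by linarith)).ne']
    unfold stMain
    linarith
  have hpern : ∀ n : ℕ, D (z + n) = D z := by
    intro n
    induction n with
    | zero => simp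
    | succ n ih =>
      rw [← ih, ← hper (z + n) (by positivity)]
      push_cast; ring_nf
  have hGn : ∀ n : ℕ, Real.log (Real.Gamma (z + a + n)) = Real.log (Real.Gamma (z + a))
      + ∑ m ∈ Finset.range n, Real.log (z + a + m) := by
    intro n
    induction n with
    | zero => simp
    | succ n ih =>
      rw [Finset.sum_range_succ, ← add_assoc, ← ih]
      have h2 : Real.Gamma (z + a + (n + 1 : ℕ)) = (z + a + n) * Real.Gamma (z + a + n) := by
        rw [← Real.Gamma_add_one (by positivity)]; push_cast; ring_nf
      rw [h2, Real.log_mul (by positivity) (Real.Gamma_pos_of_pos (by positivity)).ne']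
      ring
  have hlim : Tendsto (fun n : ℕ => D (z + (n + 1 : ℕ))) atTop (nhds 0) := by
    have t1 := (Real.BohrMollerup.tendsto_log_gamma (x := z + a) (by linarith)).const_sub
      (Real.log (Real.Gamma (z + a)))
    rw [sub_self] at t1
    have t2 := log_factorial_tendsto
    have t3 := (z_log_ratio_tendsto (z + 1)).comp tendsto_natCast_atTop_atTop
    have t4 := ((log_ratio_tendsto (z + 1)).comp tendsto_natCast_atTop_atTop).const_mul (z + 1 + a - 1/2)
    have t5 : Tendsto (fun n : ℕ => Lap (binB a) (z + (n + 1 : ℕ))) atTop (nhds 0) := by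
      refine (Lap_tendsto (binB_ok ha)).comp ?_
      refine tendsto_atTop_add_const_left _ _ ?_
      exact tendsto_natCast_atTop_atTop.comp (tendsto_add_atTop_nat 1)
    have := (((t1.add t2).sub t3).sub t4).sub t5
    have e0 : (0 + 0 - (z + 1) - (z + 1 + a - 1/2) * 0 - 0 : ℝ) = -(z + 1) := by ring
    rw [e0] at this
    have := this.add_const (z + 1)
    rw [neg_add_cancel] at this
    refine this.congr (fun n => ?_)
    rw [hD]
    simp only [Function.comp]
    have e1 : z + ((n + 1 : ℕ) : ℝ) + a = z + a + ((n + 1 : ℕ) : ℝ) := by ring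
    rw [e1, hGn (n + 1)]
    unfold stMain Real.BohrMollerup.logGammaSeq
    have e2 : z + ((n + 1 : ℕ) : ℝ) = n + (z + 1) := by push_cast; ring
    rw [e2]
    ring
  have hz0 : D z = 0 := by
    refine tendsto_nhds_unique ?_ hlim
    refine tendsto_const_nhds.congr (fun n => (hpern (n+1)).symm)
  have : Real.log (Real.Gamma (z + a)) - (stMain a z + Lap (binB a) z) = 0 := hz0
  linarith

noncomputable def rA (A a u : ℝ) : ℝ := binB a (u / A) / A

lemma div_maps {A : ℝ} (hA : 0 < A) : Set.MapsTo (fun u : ℝ => u / A) (Set.Ioi 0) (Set.Ioi 0) :=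
  fun _ hu => div_pos hu hA

lemma rA_cont {A : ℝ} (hA : 0 < A) (a : ℝ) : ContinuousOn (rA A a) (Set.Ioi 0) := by
  unfold rA
  exact ((binB_cont a).comp (by fun_prop) (div_maps hA)).div_const _

lemma rA_meas (A a : ℝ) : Measurable (rA A a) := by
  unfold rA binB
  fun_prop

lemma rA_bdd {A a : ℝ} (hA : 0 < A) (ha : 0 ≤ a) : ∃ M, ∀ t > 0, |rA A a t| ≤ M := by
  obtain ⟨M, hM⟩ := binB_bdd ha
  refine ⟨M / A, fun t ht => ?_⟩
  unfold rA
  rw [abs_div, abs_of_pos hA]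
  gcongr
  exact hM _ (div_pos ht hA)

lemma rA_ok {A a : ℝ} (hA : 0 < A) (ha : 0 ≤ a) : LapOK (rA A a) := by
  obtain ⟨M, hM⟩ := rA_bdd hA ha
  exact lapOK_of_bounded (rA_cont hA a) hM

lemma Lap_rA {A : ℝ} (hA : 0 < A) (a x : ℝ) : Lap (rA A a) x = Lap (binB a) (A * x) := by
  have := integral_comp_mul_left_Ioi (fun u => Real.exp (-(x * u)) * rA A a u) 0 hA
  rw [mul_zero] at this
  have h2 := congrArg (fun z => A * z) this
  simp only [smul_eq_mul, ← mul_assoc, mul_inv_cancel₀ hA.ne', one_mul] at h2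
  unfold Lap
  rw [← h2, ← integral_const_mul]
  congr 1; ext t
  unfold rA
  rw [mul_div_cancel_left₀ _ hA.ne']
  field_simp

lemma logGamma_A {A a x : ℝ} (hA : 0 < A) (ha : 0 ≤ a) (hx : 0 < x) :
    Real.log (Real.Gamma (A * x + a)) = A * (x * Real.log x - x) + x * (A * Real.log A)
      + (a - 1/2) * Real.log x + ((a - 1/2) * Real.log A + Real.log (2 * Real.pi) / 2)
      + Lap (rA A a) x := by
  rw [binet ha (mul_pos hA hx), Lap_rA hA, stMain, Real.log_mul hA.ne' hx.ne']
  ring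

lemma lapOK_sum {ι : Type*} [Fintype ι] {φ : ι → ℝ → ℝ} (h : ∀ i, LapOK (φ i)) :
    LapOK (fun t => ∑ i, φ i t) := by
  intro x hx
  have := integrable_finset_sum (μ := volume.restrict (Set.Ioi 0)) Finset.univ (fun i _ => h i x hx)
  refine this.congr (Eventually.of_forall (fun t => ?_))
  simp only []
  rw [Finset.mul_sum]

lemma Lap_sum {ι : Type*} [Fintype ι] {φ : ι → ℝ → ℝ} (h : ∀ i, LapOK (φ i)) {x : ℝ} (hx : 0 < x) :
    Lap (fun t => ∑ i, φ i t) x = ∑ i, Lap (φ i) x := by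
  unfold Lap
  rw [← integral_finset_sum _ (fun i _ => h i x hx)]
  congr 1; ext t; rw [Finset.mul_sum]

noncomputable def rr {p q : ℕ} (A : Fin p → ℝ) (B : Fin q → ℝ) (a : Fin p → ℝ) (b : Fin q → ℝ) (t : ℝ) : ℝ :=
  (∑ k, rA (A k) (a k) t) - ∑ j, rA (B j) (b j) t

noncomputable def Kc {p q : ℕ} (A : Fin p → ℝ) (B : Fin q → ℝ) (a : Fin p → ℝ) (b : Fin q → ℝ) : ℝ :=
  (∑ k, ((a k - 1/2) * Real.log (A k) + Real.log (2 * Real.pi) / 2)) -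
    ∑ j, ((b j - 1/2) * Real.log (B j) + Real.log (2 * Real.pi) / 2)

section
variable {p q : ℕ} {A : Fin p → ℝ} {B : Fin q → ℝ} {a : Fin p → ℝ} {b : Fin q → ℝ}

lemma rr_cont (hA : ∀ k, 0 < A k) (hB : ∀ j, 0 < B j) : ContinuousOn (rr A B a b) (Set.Ioi 0) :=
  (continuousOn_finset_sum _ (fun k _ => rA_cont (hA k) _)).sub
    (continuousOn_finset_sum _ (fun k _ => rA_cont (hB k) _))

lemma rr_meas : Measurable (rr A B a b) := by
  unfold rr
  exact (Finset.measurable_fun_sum _ (fun k _ => rA_meas _ _)).sub (Finset.measurable_fun_sum _ (fun k _ => rA_meas _ _))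

lemma sum_bdd {ι : Type*} [Fintype ι] {φ : ι → ℝ → ℝ} (h : ∀ i, ∃ M, ∀ t > 0, |φ i t| ≤ M) :
    ∃ M, ∀ t > 0, |∑ i, φ i t| ≤ M := by
  choose M hM using h
  exact ⟨∑ i, M i, fun t ht => (Finset.abs_sum_le_sum_abs _ _).trans (Finset.sum_le_sum (fun i _ => hM i t ht))⟩

lemma rr_bdd (hA : ∀ k, 0 < A k) (hB : ∀ j, 0 < B j) (ha : ∀ k, 0 ≤ a k) (hb : ∀ j, 0 ≤ b j) :
    ∃ M, ∀ t > 0, |rr A B a b t| ≤ M := by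
  obtain ⟨M, hM⟩ := sum_bdd (fun k => rA_bdd (hA k) (ha k))
  obtain ⟨N, hN⟩ := sum_bdd (fun k => rA_bdd (hB k) (hb k))
  exact ⟨M + N, fun t ht => (abs_sub _ _).trans (add_le_add (hM t ht) (hN t ht))⟩

lemma rr_ok (hA : ∀ k, 0 < A k) (hB : ∀ j, 0 < B j) (ha : ∀ k, 0 ≤ a k) (hb : ∀ j, 0 ≤ b j) :
    LapOK (rr A B a b) := by
  obtain ⟨M, hM⟩ := rr_bdd hA hB ha hb
  exact lapOK_of_bounded (rr_cont hA hB) hM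

lemma W_pos (hA : ∀ k, 0 < A k) (hB : ∀ j, 0 < B j) (ha : ∀ k, 0 ≤ a k) (hb : ∀ j, 0 ≤ b j) {x : ℝ} (hx : 0 < x) :
    0 < (∏ i, Real.Gamma (A i * x + a i)) / ∏ j, Real.Gamma (B j * x + b j) :=
  div_pos (Finset.prod_pos (fun k _ => Real.Gamma_pos_of_pos (by have := hA k; have := ha k; positivity)))
    (Finset.prod_pos (fun k _ => Real.Gamma_pos_of_pos (by have := hB k; have := hb k; positivity)))

lemma log_rho (hA : ∀ k, 0 < A k) (hB : ∀ j, 0 < B j) :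
    Real.log ((∏ k, A k ^ A k) * ∏ j, B j ^ (-B j)) =
      (∑ k, A k * Real.log (A k)) - ∑ j, B j * Real.log (B j) := by
  have h1 : ∀ k, A k ^ A k ≠ 0 := fun k => (Real.rpow_pos_of_pos (hA k) _).ne'
  have h2 : ∀ k, B k ^ (-B k) ≠ 0 := fun k => (Real.rpow_pos_of_pos (hB k) _).ne'
  rw [Real.log_mul (Finset.prod_ne_zero_iff.2 (fun k _ => h1 k)) (Finset.prod_ne_zero_iff.2 (fun k _ => h2 k)),
    Real.log_prod (fun k _ => h1 k), Real.log_prod (fun k _ => h2 k), sub_eq_add_neg, ← Finset.sum_neg_distrib]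
  congr 1
  · exact Finset.sum_congr rfl (fun k _ => Real.log_rpow (hA k) _)
  · exact Finset.sum_congr rfl (fun k _ => by rw [Real.log_rpow (hB k)]; ring)

lemma rho_pos (hA : ∀ k, 0 < A k) (hB : ∀ j, 0 < B j) :
    0 < (∏ k, A k ^ A k) * ∏ j, B j ^ (-B j) :=
  mul_pos (Finset.prod_pos (fun k _ => Real.rpow_pos_of_pos (hA k) _))
    (Finset.prod_pos (fun k _ => Real.rpow_pos_of_pos (hB k) _))

lemma log_W (hA : ∀ k, 0 < A k) (hB : ∀ j, 0 < B j) (ha : ∀ k, 0 ≤ a k) (hb : ∀ j, 0 ≤ b j)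
    {x : ℝ} (hx : 0 < x) :
    Real.log ((∏ i, Real.Gamma (A i * x + a i)) / ∏ j, Real.Gamma (B j * x + b j)) =
      ((∑ k, A k) - ∑ j, B j) * (x * Real.log x - x) +
      x * Real.log ((∏ k, A k ^ A k) * ∏ j, B j ^ (-B j))
      - ((∑ j, b j) - (∑ k, a k) + ((p : ℝ) - (q : ℝ)) / 2) * Real.log x
      + Kc A B a b + Lap (rr A B a b) x := by
  have h1 : ∀ k, Real.Gamma (A k * x + a k) ≠ 0 := fun k =>
    (Real.Gamma_pos_of_pos (by have := hA k; have := ha k; positivity)).ne'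
  have h2 : ∀ k, Real.Gamma (B k * x + b k) ≠ 0 := fun k =>
    (Real.Gamma_pos_of_pos (by have := hB k; have := hb k; positivity)).ne'
  rw [Real.log_div (Finset.prod_ne_zero_iff.2 (fun k _ => h1 k)) (Finset.prod_ne_zero_iff.2 (fun k _ => h2 k)),
    Real.log_prod (fun k _ => h1 k), Real.log_prod (fun k _ => h2 k), log_rho hA hB]
  have e3 : Lap (rr A B a b) x = (∑ k, Lap (rA (A k) (a k)) x) - ∑ k, Lap (rA (B k) (b k)) x := by
    rw [← Lap_sum (fun k => rA_ok (hA k) (ha k)) hx, ← Lap_sum (fun k => rA_ok (hB k) (hb k)) hx]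
    exact Lap_sub (lapOK_sum (fun k => rA_ok (hA k) (ha k))) (lapOK_sum (fun k => rA_ok (hB k) (hb k))) hx
  rw [e3, Finset.sum_congr rfl (fun k _ => logGamma_A (hA k) (ha k) hx),
    Finset.sum_congr rfl (fun k _ => logGamma_A (hB k) (hb k) hx)]
  unfold Kc
  simp only [Finset.sum_add_distrib, ← Finset.sum_mul, ← Finset.mul_sum, Finset.sum_sub_distrib,
    Finset.sum_const, Finset.card_univ, Fintype.card_fin, nsmul_eq_mul]
  ring

noncomputable def EE (A a t : ℝ) : ℝ := Real.exp (-(a * (t / A))) / (1 - Real.exp (-(t / A)))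

lemma t_rA {A : ℝ} (hA : 0 < A) (a : ℝ) {t : ℝ} (ht : 0 < t) :
    t * rA A a t = EE A a t - A / t - 1/2 + a := by
  unfold rA binB EE
  have : 1 / (t / A) = A / t := by rw [one_div_div]
  rw [this]
  field_simp

lemma t_rr (hA : ∀ k, 0 < A k) (hB : ∀ j, 0 < B j) (hAB : ∑ k, A k = ∑ j, B j) {t : ℝ} (ht : 0 < t) :
    ((∑ j, b j) - (∑ k, a k) + ((p : ℝ) - (q : ℝ)) / 2) + t * rr A B a b t =
      (∑ k, EE (A k) (a k) t) - ∑ j, EE (B j) (b j) t := by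
  unfold rr
  rw [mul_sub, Finset.mul_sum, Finset.mul_sum, Finset.sum_congr rfl (fun k _ => t_rA (hA k) (a k) ht),
    Finset.sum_congr rfl (fun k _ => t_rA (hB k) (b k) ht)]
  simp only [Finset.sum_add_distrib, Finset.sum_sub_distrib, ← Finset.sum_div, hAB,
    Finset.sum_const, Finset.card_univ, Fintype.card_fin, nsmul_eq_mul]
  ring
end

/-- one-sided convolution -/
noncomputable def cv (r f : ℝ → ℝ) (t : ℝ) : ℝ :=
  ∫ s, (Set.Ioi (0:ℝ)).indicator f s * (Set.Ioi (0:ℝ)).indicator r (t - s)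

lemma cv_nonpos (r f : ℝ → ℝ) {t : ℝ} (ht : t ≤ 0) : cv r f t = 0 := by
  unfold cv
  refine integral_eq_zero_of_ae (Eventually.of_forall (fun s => ?_))
  show (Set.Ioi (0:ℝ)).indicator f s * (Set.Ioi (0:ℝ)).indicator r (t - s) = 0
  by_cases hs : 0 < s
  · rw [Set.indicator_of_notMem (s := Set.Ioi (0:ℝ)) (f := r) (a := t - s) (by simp only [Set.mem_Ioi, not_lt]; linarith), mul_zero]
  · rw [Set.indicator_of_notMem (s := Set.Ioi (0:ℝ)) (f := f) (a := s) (by simpa using hs), zero_mul]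

lemma cv_exp (r f : ℝ → ℝ) (x t : ℝ) :
    Real.exp (-(x*t)) * cv r f t =
    convolution ((Set.Ioi (0:ℝ)).indicator (fun s => Real.exp (-(x*s)) * f s))
      ((Set.Ioi (0:ℝ)).indicator (fun s => Real.exp (-(x*s)) * r s)) (ContinuousLinearMap.mul ℝ ℝ) volume t := by
  unfold cv convolution
  rw [← integral_const_mul]
  congr 1; ext s
  rw [ContinuousLinearMap.mul_apply']
  simp only [Set.indicator]
  have : Real.exp (-(x*t)) = Real.exp (-(x*s)) * Real.exp (-(x*(t-s))) := by
    rw [← Real.exp_add]; ring_nf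
  split_ifs
  · rw [this]; ring
  · simp
  · simp
  · simp

lemma cv_ok {r f : ℝ → ℝ} (hr : LapOK r) (hf : LapOK f) : LapOK (cv r f) := by
  intro x hx
  have h1 := (integrable_indicator_iff measurableSet_Ioi).2 (hf x hx)
  have h2 := (integrable_indicator_iff measurableSet_Ioi).2 (hr x hx)
  have := Integrable.integrable_convolution (ContinuousLinearMap.mul ℝ ℝ) h1 h2
  refine Integrable.integrableOn ?_
  refine this.congr (Eventually.of_forall (fun t => ?_))
  exact (cv_exp r f x t).symm

lemma cv_lap {r f : ℝ → ℝ} (hr : LapOK r) (hf : LapOK f) {x : ℝ} (hx : 0 < x) :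
    Lap (cv r f) x = Lap f x * Lap r x := by
  have h1 := (integrable_indicator_iff measurableSet_Ioi).2 (hf x hx)
  have h2 := (integrable_indicator_iff measurableSet_Ioi).2 (hr x hx)
  have := integral_convolution (ContinuousLinearMap.mul ℝ ℝ) h1 h2
  rw [integral_indicator measurableSet_Ioi, integral_indicator measurableSet_Ioi,
    ContinuousLinearMap.mul_apply'] at this
  unfold Lap
  rw [← this, setIntegral_eq_integral_of_forall_compl_eq_zero]
  · congr 1; ext t; exact cv_exp r f x t
  · intro t ht
    rw [cv_nonpos r f (by simpa using ht), mul_zero]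

lemma cv_integrand_int {r f : ℝ → ℝ} {M : ℝ} (hrm : Measurable r) (hrb : ∀ t > 0, |r t| ≤ M)
    (hf : LapOK f) (t : ℝ) :
    (∀ s, |(Set.Ioi (0:ℝ)).indicator f s * (Set.Ioi (0:ℝ)).indicator r (t - s)| ≤
      M * Real.exp t * (Set.Ioi (0:ℝ)).indicator (fun s => |Real.exp (-(1*s)) * f s|) s) := by
  have hM : 0 ≤ M := (abs_nonneg _).trans (hrb 1 one_pos)
  intro s
  simp only [Set.indicator]
  split_ifs with h1 h2
  · rw [abs_mul, abs_mul, Real.abs_exp]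
    have h2 : 0 < t - s := h2
    have e1 : 1 ≤ Real.exp t * Real.exp (-(1*s)) := by
      rw [← Real.exp_add]; exact Real.one_le_exp (by linarith)
    calc |f s| * |r (t-s)| ≤ |f s| * M := by gcongr; exact hrb _ h2
      _ = M * 1 * |f s| := by ring
      _ ≤ M * (Real.exp t * Real.exp (-(1*s))) * |f s| := by gcongr
      _ = _ := by ring
  · simp; positivity
  · simp
  · simp

lemma cv_abs_le {r f : ℝ → ℝ} {M : ℝ} (hrm : Measurable r) (hrb : ∀ t > 0, |r t| ≤ M)
    (hf : LapOK f) (t : ℝ) : |cv r f t| ≤ M * Real.exp t * Lap (fun t => |f t|) 1 := by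
  have hb := cv_integrand_int hrm hrb hf t
  have hi : Integrable (fun s => M * Real.exp t * (Set.Ioi (0:ℝ)).indicator (fun s => |Real.exp (-(1*s)) * f s|) s) :=
    Integrable.const_mul ((integrable_indicator_iff measurableSet_Ioi).2 (hf 1 one_pos).norm) _
  have := norm_integral_le_of_norm_le hi (Eventually.of_forall (fun s => by
    rw [Real.norm_eq_abs]; exact hb s))
  unfold cv
  rw [Real.norm_eq_abs] at this
  refine this.trans (le_of_eq ?_)
  rw [integral_const_mul, integral_indicator measurableSet_Ioi]
  unfold Lap
  congr 2; ext s; rw [abs_mul, Real.abs_exp]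

lemma cv_cont {r f : ℝ → ℝ} {M : ℝ} (hrm : Measurable r) (hrc : ContinuousOn r (Set.Ioi 0))
    (hrb : ∀ t > 0, |r t| ≤ M) (hf : LapOK f) (t : ℝ) : ContinuousAt (cv r f) t := by
  have hM : 0 ≤ M := (abs_nonneg _).trans (hrb 1 one_pos)
  unfold cv
  refine continuousAt_of_dominated (bound := fun s => M * Real.exp (t+1) *
    (Set.Ioi (0:ℝ)).indicator (fun s => |Real.exp (-(1*s)) * f s|) s) ?_ ?_ ?_ ?_
  · refine Eventually.of_forall (fun y => ?_)
    refine AEStronglyMeasurable.mul ?_ ?_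
    · exact (aestronglyMeasurable_indicator_iff measurableSet_Ioi).2 hf.aesm
    · refine Measurable.aestronglyMeasurable ?_
      exact (hrm.indicator measurableSet_Ioi).comp (measurable_const.sub measurable_id)
  · filter_upwards [Iio_mem_nhds (show t < t + 1 by linarith)] with y hy
    refine Eventually.of_forall (fun s => ?_)
    rw [Real.norm_eq_abs]
    refine (cv_integrand_int hrm hrb hf y s).trans ?_
    refine mul_le_mul_of_nonneg_right ?_ ?_
    · refine mul_le_mul_of_nonneg_left (Real.exp_le_exp.2 (le_of_lt hy)) hM
    · exact Set.indicator_nonneg (fun _ _ => abs_nonneg _) _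
  · exact Integrable.const_mul ((integrable_indicator_iff measurableSet_Ioi).2 (hf 1 one_pos).norm) _
  · have : ∀ᵐ s : ℝ, s ≠ t := by simp [ae_iff]
    filter_upwards [this] with s hs
    refine ContinuousAt.mul continuousAt_const ?_
    have h1 : ContinuousAt ((Set.Ioi (0:ℝ)).indicator r) (t - s) := by
      rcases lt_or_gt_of_ne hs with h | h
      · have h0 : t - s ∈ Set.Ioi (0:ℝ) := by simp; linarith
        have := hrc.continuousAt (Ioi_mem_nhds h0)
        refine this.congr ?_
        filter_upwards [Ioi_mem_nhds h0] with y hy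
        rw [Set.indicator_of_mem hy]
      · have h0 : t - s ∈ Set.Iio (0:ℝ) := by simp; linarith
        refine (continuousAt_const (y := (0:ℝ))).congr ?_
        filter_upwards [Iio_mem_nhds h0] with y hy
        rw [Set.indicator_of_notMem]
        simp only [Set.mem_Ioi, not_lt]; exact le_of_lt hy
    exact ContinuousAt.comp (f := fun y => y - s) h1 (by fun_prop)

noncomputable def fn (μ : ℝ) (r : ℝ → ℝ) : ℕ → ℝ → ℝ
  | 0 => fun t => t ^ (μ - 1) / Real.Gamma μ
  | n + 1 => cv r (fn μ r n)

lemma LapOK.abs {φ : ℝ → ℝ} (h : LapOK φ) : LapOK (fun t => |φ t|) := by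
  intro x hx
  refine (h x hx).norm.congr (Eventually.of_forall (fun t => ?_))
  simp [abs_mul]

lemma fn_zero_lap {μ : ℝ} (hμ : 0 < μ) (r : ℝ → ℝ) {x : ℝ} (hx : 0 < x) :
    Lap (fn μ r 0) x = x ^ (-μ) := by
  have := Real.integral_rpow_mul_exp_neg_mul_Ioi hμ hx
  have hG := (Real.Gamma_pos_of_pos hμ).ne'
  unfold Lap fn
  rw [Real.rpow_neg hx.le, ← Real.inv_rpow hx.le, ← one_div]
  rw [eq_comm, ← div_eq_iff hG |>.2 this, eq_comm, ← integral_div]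
  congr 1; ext t; ring

lemma fn_ok {μ : ℝ} (hμ : 0 < μ) {r : ℝ → ℝ} (hr : LapOK r) (n : ℕ) : LapOK (fn μ r n) := by
  induction n with
  | zero =>
    intro x hx
    refine Integrable.of_integral_ne_zero ?_
    have := fn_zero_lap hμ r hx
    unfold Lap at this
    rw [this]; positivity
  | succ n ih => exact cv_ok hr ih

lemma fn_lap {μ : ℝ} (hμ : 0 < μ) {r : ℝ → ℝ} (hr : LapOK r) (n : ℕ) {x : ℝ} (hx : 0 < x) :
    Lap (fn μ r n) x = x ^ (-μ) * Lap r x ^ n := by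
  induction n with
  | zero => rw [fn_zero_lap hμ r hx]; simp
  | succ n ih =>
    show Lap (cv r (fn μ r n)) x = _
    rw [cv_lap hr (fn_ok hμ hr n) hx, ih]; ring

lemma cv_abs_le_cv {r f : ℝ → ℝ} {M : ℝ} (hrb : ∀ t > 0, |r t| ≤ M) (hrm : Measurable r)
    (hf : LapOK f) (t : ℝ) :
    |cv r f t| ≤ cv (fun _ => M) (fun t => |f t|) t := by
  have hM : 0 ≤ M := (abs_nonneg _).trans (hrb 1 one_pos)
  unfold cv
  have hi : Integrable (fun s => (Set.Ioi (0:ℝ)).indicator (fun t => |f t|) s *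
      (Set.Ioi (0:ℝ)).indicator (fun _ => M) (t - s)) := by
    have hi0 : Integrable (fun s => M * Real.exp t * (Set.Ioi (0:ℝ)).indicator (fun s => |(Real.exp (-(1*s)) * |f s| )|) s) :=
      Integrable.const_mul ((integrable_indicator_iff measurableSet_Ioi).2 (hf.abs 1 one_pos).norm) _
    refine hi0.mono' ?_ ?_
    · refine AEStronglyMeasurable.mul ?_ ?_
      · exact (aestronglyMeasurable_indicator_iff measurableSet_Ioi).2 hf.abs.aesm
      · refine Measurable.aestronglyMeasurable ?_
        exact (measurable_const.indicator measurableSet_Ioi).comp (measurable_const.sub measurable_id)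
    · refine Eventually.of_forall (fun s => ?_)
      rw [Real.norm_eq_abs]
      exact cv_integrand_int (M := M) (r := fun _ => M) measurable_const (fun _ _ => by rw [abs_of_nonneg hM]) hf.abs t s
  rw [← Real.norm_eq_abs]
  refine norm_integral_le_of_norm_le hi (Eventually.of_forall (fun s => ?_))
  rw [Real.norm_eq_abs, abs_mul]
  simp only [Set.indicator]
  split_ifs with h1 h2
  · exact mul_le_mul_of_nonneg_left (hrb _ h2) (abs_nonneg _)
  · simp
  · simp
  · simp

lemma fn_abs_lap {μ : ℝ} (hμ : 0 < μ) {r : ℝ → ℝ} {M : ℝ} (hrm : Measurable r)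
    (hrb : ∀ t > 0, |r t| ≤ M) (hr : LapOK r) (n : ℕ) {x : ℝ} (hx : 0 < x) :
    Lap (fun t => |fn μ r n t|) x ≤ x ^ (-μ) * (M / x) ^ n := by
  have hM : 0 ≤ M := (abs_nonneg _).trans (hrb 1 one_pos)
  induction n with
  | zero =>
    rw [← fn_zero_lap hμ r hx]
    simp only [pow_zero, mul_one]
    refine le_of_eq (Lap_congr (fun t ht => ?_) x)
    unfold fn
    exact abs_of_pos (div_pos (Real.rpow_pos_of_pos ht _) (Real.Gamma_pos_of_pos hμ))
  | succ n ih =>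
    have hMok : LapOK (fun _ => M) := by simpa using lapOK_one.const_mul M
    have hok := fn_ok hμ hr n
    have h1 : Lap (fun t => |fn μ r (n+1) t|) x ≤ Lap (cv (fun _ => M) (fun t => |fn μ r n t|)) x := by
      unfold Lap
      refine integral_mono ((fn_ok hμ hr (n+1)).abs x hx) (cv_ok hMok hok.abs x hx) (fun t => ?_)
      exact mul_le_mul_of_nonneg_left (cv_abs_le_cv hrb hrm hok t) (Real.exp_pos _).le
    refine h1.trans ?_
    rw [cv_lap hMok hok.abs hx]
    have : Lap (fun _ => M) x = M / x := by
      have := Lap_const_mul (φ := fun _ => 1) M x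
      rw [Lap_one hx] at this
      simp only [mul_one] at this
      rw [this]; ring
    rw [this, pow_succ, ← mul_assoc]
    exact mul_le_mul_of_nonneg_right ih (by positivity)

theorem exists_density {μ : ℝ} (hμ : 0 < μ) {r : ℝ → ℝ} {M : ℝ} (hrm : Measurable r)
    (hrc : ContinuousOn r (Set.Ioi 0)) (hrb : ∀ t > 0, |r t| ≤ M) :
    ∃ f : ℝ → ℝ, ContinuousOn f (Set.Ioi 0) ∧ LapOK f ∧
      ∀ x > 0, Lap f x = x ^ (-μ) * Real.exp (Lap r x) := by
  have hM : 0 ≤ M := (abs_nonneg _).trans (hrb 1 one_pos)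
  have hr : LapOK r := lapOK_of_bounded hrc hrb
  have hbd : ∀ n t, |fn μ r (n+1) t| ≤ Real.exp t * M ^ (n+1) := by
    intro n t
    refine (cv_abs_le hrm hrb (fn_ok hμ hr n) t).trans ?_
    have := fn_abs_lap hμ hrm hrb hr n one_pos
    simp only [Real.one_rpow, one_mul, div_one] at this
    calc _ ≤ M * Real.exp t * M ^ n := by gcongr
      _ = _ := by ring
  have hsumM : ∀ c : ℝ, Summable (fun n : ℕ => c * (M ^ (n+1) / ((n+1).factorial : ℝ))) := fun c =>
    ((summable_nat_add_iff 1).2 (Real.summable_pow_div_factorial M)).mul_left c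
  have hterm : ∀ (T t : ℝ) (n : ℕ), t ≤ T → ‖fn μ r (n+1) t / ((n+1).factorial : ℝ)‖ ≤
      Real.exp T * (M ^ (n+1) / ((n+1).factorial : ℝ)) := by
    intro T t n ht
    rw [norm_div, Real.norm_eq_abs, RCLike.norm_natCast, ← mul_div_assoc]
    gcongr
    refine (hbd n t).trans ?_
    gcongr
  have hsum : ∀ t, Summable (fun n : ℕ => fn μ r n t / (n.factorial : ℝ)) := by
    intro t
    rw [← summable_nat_add_iff 1]
    exact Summable.of_norm_bounded (hsumM (Real.exp t)) (fun n => hterm t t n le_rfl)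
  set f : ℝ → ℝ := fun t => ∑' n : ℕ, fn μ r n t / (n.factorial : ℝ) with hf
  have hfc : ContinuousOn f (Set.Ioi 0) := by
    intro t ht
    have ht : 0 < t := ht
    refine ContinuousAt.continuousWithinAt ?_
    have e : f = fun t => fn μ r 0 t / ((0:ℕ).factorial : ℝ) + ∑' n : ℕ, fn μ r (n+1) t / ((n+1).factorial : ℝ) := by
      ext t; rw [hf]; exact (hsum t).tsum_eq_zero_add
    rw [e]
    refine ContinuousAt.add ?_ ?_
    · unfold fn
      refine ContinuousAt.div_const (ContinuousAt.div_const ?_ _) _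
      exact Real.continuousAt_rpow_const _ _ (Or.inl ht.ne')
    · have : ContinuousOn (fun t => ∑' n : ℕ, fn μ r (n+1) t / ((n+1).factorial : ℝ)) (Set.Iio (t+1)) := by
        refine continuousOn_tsum (fun n => ?_) (hsumM (Real.exp (t+1))) (fun n s hs => hterm (t+1) s n (le_of_lt hs))
        intro s _
        refine ContinuousAt.continuousWithinAt (ContinuousAt.div_const ?_ _)
        exact cv_cont hrm hrc hrb (fn_ok hμ hr n) s
      exact this.continuousAt (Iio_mem_nhds (by linarith))
  have hlap : ∀ x > 0, Lap f x = x ^ (-μ) * Real.exp (Lap r x) := by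
    intro x hx
    have hInt : ∀ n, IntegrableOn (fun t => Real.exp (-(x*t)) * (fn μ r n t / (n.factorial : ℝ))) (Set.Ioi 0) := by
      intro n
      refine ((fn_ok hμ hr n x hx).div_const (n.factorial : ℝ)).congr (Eventually.of_forall fun t => ?_)
      simp only []; ring
    have hs := hasSum_integral_of_summable_integral_norm hInt ?_
    · have e1 : ∀ n : ℕ, ∫ t in Set.Ioi (0:ℝ), Real.exp (-(x*t)) * (fn μ r n t / (n.factorial : ℝ))
          = x ^ (-μ) * (Lap r x ^ n / (n.factorial : ℝ)) := by
        intro n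
        have := fn_lap hμ hr n hx
        rw [← mul_div_assoc, ← this]
        unfold Lap
        rw [← integral_div]
        congr 1; ext t; ring
      simp_rw [e1] at hs
      have hs2 : HasSum (fun n : ℕ => x ^ (-μ) * (Lap r x ^ n / (n.factorial : ℝ)))
          (x ^ (-μ) * Real.exp (Lap r x)) := by
        refine HasSum.mul_left _ ?_
        rw [Real.exp_eq_exp_ℝ]
        exact NormedSpace.expSeries_div_hasSum_exp (Lap r x)
      rw [← hs.unique hs2]
      unfold Lap
      congr 1; ext t
      rw [hf]; simp only []
      rw [tsum_mul_left]
    · have hsm : Summable (fun n : ℕ => x ^ (-μ) * ((M/x) ^ n / (n.factorial : ℝ))) :=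
        (Real.summable_pow_div_factorial (M/x)).mul_left _
      refine Summable.of_nonneg_of_le (fun n => integral_nonneg (fun t => norm_nonneg _)) (fun n => ?_) hsm
      have := fn_abs_lap hμ hrm hrb hr n hx
      have e : ∫ t in Set.Ioi (0:ℝ), ‖Real.exp (-(x*t)) * (fn μ r n t / (n.factorial : ℝ))‖
          = Lap (fun t => |fn μ r n t|) x / (n.factorial : ℝ) := by
        unfold Lap
        rw [← integral_div]
        congr 1; ext t
        rw [norm_mul, norm_div, Real.norm_eq_abs, Real.norm_eq_abs, Real.abs_exp, RCLike.norm_natCast]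
        ring
      rw [e, ← mul_div_assoc]
      gcongr
  refine ⟨f, hfc, ?_, hlap⟩
  intro x hx
  refine Integrable.of_integral_ne_zero ?_
  have := hlap x hx
  unfold Lap at this
  rw [this]; positivity

lemma gauss_c (k : ℝ) (hk : 0 < k) (v : ℝ) :
    HasDerivAt (fun v : ℝ => Real.exp (-(v / k)^2)) (-(2 * (v / k) / k) * Real.exp (-(v/k)^2)) v := by
  have h1 : HasDerivAt (fun v : ℝ => -(v / k)^2) (-(2 * (v / k) * (1 / k))) v := by
    have := (((hasDerivAt_id' v).div_const k).fun_pow 2).fun_neg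
    refine this.congr_deriv ?_
    simp
  refine h1.exp.congr_deriv ?_
  field_simp

lemma gauss_int (k : ℝ) (hk : 0 < k) : Integrable (fun v : ℝ => Real.exp (-(v / k)^2)) := by
  have := integrable_exp_neg_mul_sq (b := 1 / k^2) (by positivity)
  refine this.congr (Eventually.of_forall (fun v => ?_))
  simp only []
  congr 1; field_simp

lemma gauss_vint : IntegrableOn (fun v : ℝ => 2 * v * Real.exp (-v^2)) (Set.Ioi 0) := by
  have := (integrable_mul_exp_neg_mul_sq (b := 1) (by positivity)).const_mul 2
  refine (this.congr (Eventually.of_forall (fun v => ?_))).integrableOn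
  simp only []
  ring_nf

lemma gauss_vone : ∫ v in Set.Ioi (0:ℝ), 2 * v * Real.exp (-v^2) = 1 := by
  have := integral_Ioi_of_hasDerivAt_of_tendsto (f := fun v : ℝ => -Real.exp (-v^2)) (a := 0) (m := 0)
    (f' := fun v => 2 * v * Real.exp (-v^2)) (by fun_prop) (fun v _ => ?_) gauss_vint ?_
  · rw [this]; simp
  · have := (gauss_c 1 one_pos v).fun_neg
    simp only [div_one] at this
    refine this.congr_deriv ?_
    ring
  · rw [← neg_zero]
    refine Tendsto.neg ?_
    refine Real.tendsto_exp_neg_atTop_nhds_zero.comp (tendsto_pow_atTop two_ne_zero)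

lemma abel_parts {Φ : ℝ → ℂ} (hc : Continuous Φ) {M : ℝ} (hM : ∀ t, ‖Φ t‖ ≤ M) {k : ℝ} (hk : 0 < k)
    {N : ℝ} (hN : ∀ R ≥ 0, ‖∫ t in -R..R, Φ t‖ ≤ N) :
    ∫ w, (Real.exp (-(w/k)^2) : ℂ) * Φ w =
      ∫ v in Set.Ioi (0:ℝ), ((2 * v * Real.exp (-v^2) : ℝ) : ℂ) * ∫ t in -(k*v)..(k*v), Φ t := by
  set S : ℝ → ℂ := fun R => ∫ t in -R..R, Φ t with hS
  have hSd : ∀ R, HasDerivAt S (Φ R + Φ (-R)) R := by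
    intro R
    have e : S = fun R => (∫ t in (0:ℝ)..R, Φ t) - ∫ t in (0:ℝ)..(-R), Φ t := by
      ext R
      rw [hS]
      simp only []
      rw [intervalIntegral.integral_interval_sub_left (hc.intervalIntegrable _ _) (hc.intervalIntegrable _ _)]
    have h1 : ∀ R, HasDerivAt (fun R => ∫ t in (0:ℝ)..R, Φ t) (Φ R) R := fun R =>
      intervalIntegral.integral_hasDerivAt_right (hc.intervalIntegrable _ _)
        (hc.stronglyMeasurableAtFilter _ _) hc.continuousAt
    rw [e]
    have h2 : HasDerivAt (fun R => ∫ t in (0:ℝ)..(-R), Φ t) (-(Φ (-R))) R := by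
      have := (h1 (-R)).scomp R (hasDerivAt_neg R)
      refine this.congr_deriv ?_
      simp
    refine ((h1 R).fun_sub h2).congr_deriv ?_
    ring
  have hSc : Continuous S := continuous_iff_continuousAt.2 (fun R => (hSd R).continuousAt)
  have hintw : Integrable (fun w => (Real.exp (-(w/k)^2) : ℂ) * Φ w) := by
    refine Integrable.mono' ((gauss_int k hk).mul_const M) (Continuous.aestronglyMeasurable (by fun_prop)) ?_
    refine Eventually.of_forall (fun w => ?_)
    rw [norm_mul, Complex.norm_real, Real.norm_eq_abs, Real.abs_exp]
    exact mul_le_mul_of_nonneg_left (hM w) (Real.exp_pos _).le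
  -- substitution
  have hsub : ∫ v in Set.Ioi (0:ℝ), ((2 * v * Real.exp (-v^2) : ℝ) : ℂ) * S (k*v) =
      ∫ R in Set.Ioi (0:ℝ), ((2 * (R/k) / k * Real.exp (-(R/k)^2) : ℝ) : ℂ) * S R := by
    have := integral_comp_mul_left_Ioi
      (fun R => ((2 * (R/k) / k * Real.exp (-(R/k)^2) : ℝ) : ℂ) * S R) 0 hk
    rw [mul_zero] at this
    have h2 := congrArg (fun z => (k:ℝ) • z) this
    simp only [smul_smul, mul_inv_cancel₀ hk.ne', one_smul] at h2
    rw [← h2, ← integral_smul]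
    congr 1; ext v
    rw [mul_div_cancel_left₀ _ hk.ne', Complex.real_smul, ← mul_assoc]
    congr 1
    rw [← Complex.ofReal_mul]
    congr 1
    field_simp
  have hintS : IntegrableOn (fun R => ((2 * (R/k) / k * Real.exp (-(R/k)^2) : ℝ) : ℂ) * S R) (Set.Ioi 0) := by
    have h1 : IntegrableOn (fun R : ℝ => 2 * (R/k) / k * Real.exp (-(R/k)^2)) (Set.Ioi 0) := by
      have := (integrable_mul_exp_neg_mul_sq (b := 1/k^2) (by positivity)).const_mul (2/k^2)
      refine (this.congr (Eventually.of_forall (fun v => ?_))).integrableOn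
      simp only []
      rw [← mul_assoc]
      congr 1
      · field_simp
      · congr 1; field_simp
    refine Integrable.mono' (h1.mul_const N) (Continuous.aestronglyMeasurable (by fun_prop)) ?_
    rw [ae_restrict_iff' measurableSet_Ioi]
    refine Eventually.of_forall (fun w hw => ?_)
    have hw : 0 < w := hw
    rw [norm_mul, Complex.norm_real, Real.norm_eq_abs, abs_of_nonneg (by positivity)]
    exact mul_le_mul_of_nonneg_left (hN w hw.le) (by positivity)
  have hintP : IntegrableOn (fun R => (Real.exp (-(R/k)^2) : ℂ) * (Φ R + Φ (-R))) (Set.Ioi 0) := by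
    have := (hintw.add hintw.comp_neg).integrableOn (s := Set.Ioi 0)
    refine this.congr (Eventually.of_forall (fun v => ?_))
    simp only [Pi.add_apply, neg_div, neg_sq]; ring
  have hFT := integral_Ioi_of_hasDerivAt_of_tendsto (f := fun R : ℝ => (Real.exp (-(R/k)^2) : ℂ) * S R) (a := 0) (m := 0)
    (f' := fun R => (Real.exp (-(R/k)^2) : ℂ) * (Φ R + Φ (-R)) - ((2 * (R/k) / k * Real.exp (-(R/k)^2) : ℝ) : ℂ) * S R)
    (Continuous.continuousWithinAt (by fun_prop)) (fun v _ => ?_) (hintP.sub hintS) ?_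
  · rw [integral_sub hintP hintS] at hFT
    have e0 : S 0 = 0 := by simp [hS]
    rw [e0, mul_zero, sub_zero, sub_eq_zero] at hFT
    rw [hsub, ← hFT]
    have e1 : ∫ R in Set.Ioi (0:ℝ), (Real.exp (-(R/k)^2) : ℂ) * (Φ R + Φ (-R)) =
        (∫ R in Set.Ioi (0:ℝ), (Real.exp (-(R/k)^2) : ℂ) * Φ R) +
        ∫ R in Set.Ioi (0:ℝ), (Real.exp (-(-R/k)^2) : ℂ) * Φ (-R) := by
      rw [← integral_add hintw.integrableOn hintw.comp_neg.integrableOn]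
      congr 1; ext v
      simp only [neg_div, neg_sq]; ring
    rw [e1, integral_comp_neg_Ioi 0 (fun w => (Real.exp (-(w/k)^2) : ℂ) * Φ w), neg_zero, add_comm]
    exact (intervalIntegral.integral_Iic_add_Ioi hintw.integrableOn hintw.integrableOn).symm
  · refine ((gauss_c k hk v).ofReal_comp.fun_mul (hSd v)).congr_deriv ?_
    push_cast; ring
  · have h1 : Tendsto (fun R : ℝ => Real.exp (-(R/k)^2) * N) atTop (nhds 0) := by
      rw [← zero_mul N]
      refine Tendsto.mul_const _ ?_
      exact Real.tendsto_exp_neg_atTop_nhds_zero.comp ((tendsto_pow_atTop two_ne_zero).comp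
        (tendsto_id.atTop_div_const hk))
    refine squeeze_zero_norm' ?_ h1
    filter_upwards [eventually_ge_atTop 0] with R hR
    rw [norm_mul, Complex.norm_real, Real.norm_eq_abs, Real.abs_exp]
    exact mul_le_mul_of_nonneg_left (hN R hR) (Real.exp_pos _).le

lemma abel_lemma {Φ : ℝ → ℂ} (hc : Continuous Φ) {M : ℝ} (hM : ∀ t, ‖Φ t‖ ≤ M) {L : ℂ}
    (hL : Tendsto (fun R : ℝ => ∫ t in -R..R, Φ t) atTop (nhds L)) :
    Tendsto (fun k : ℝ => ∫ w, (Real.exp (-(w/k)^2) : ℂ) * Φ w) atTop (nhds L) := by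
  obtain ⟨N, hN⟩ : ∃ N, ∀ R ≥ 0, ‖∫ t in -R..R, Φ t‖ ≤ N := by
    have h1 : ∀ᶠ R in atTop, ‖∫ t in -R..R, Φ t‖ < ‖L‖ + 1 := hL.norm.eventually_lt_const (by linarith)
    obtain ⟨R0, h0⟩ := eventually_atTop.1 h1
    have hM0 : 0 ≤ M := (norm_nonneg _).trans (hM 0)
    refine ⟨max (‖L‖ + 1) (M * (2 * R0)), fun R hR => ?_⟩
    rcases le_or_gt R0 R with h | h
    · exact le_max_of_le_left (h0 R h).le
    · refine le_max_of_le_right ?_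
      refine (intervalIntegral.norm_integral_le_of_norm_le_const (fun t _ => hM t)).trans ?_
      rw [abs_of_nonneg (by linarith)]
      gcongr; linarith
  have e : ∫ v in Set.Ioi (0:ℝ), ((2 * v * Real.exp (-v^2) : ℝ) : ℂ) * L = L := by
    rw [integral_mul_const, integral_complex_ofReal, gauss_vone]; simp
  rw [← e]
  have hD : Tendsto (fun k : ℝ => ∫ v in Set.Ioi (0:ℝ), ((2 * v * Real.exp (-v^2) : ℝ) : ℂ) *
      ∫ t in -(k*v)..(k*v), Φ t) atTop
      (nhds (∫ v in Set.Ioi (0:ℝ), ((2 * v * Real.exp (-v^2) : ℝ) : ℂ) * L)) := by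
    refine tendsto_integral_filter_of_dominated_convergence (fun v => 2 * v * Real.exp (-v^2) * N) ?_ ?_ (gauss_vint.mul_const N) ?_
    · refine Eventually.of_forall (fun k => Continuous.aestronglyMeasurable ?_)
      have hp : Continuous (fun R => ∫ t in (0:ℝ)..R, Φ t) :=
        intervalIntegral.continuous_primitive (fun _ _ => hc.intervalIntegrable _ _) 0
      have : (fun v => ∫ t in -(k*v)..(k*v), Φ t) =
          fun v => (∫ t in (0:ℝ)..(k*v), Φ t) - ∫ t in (0:ℝ)..(-(k*v)), Φ t := by
        ext v
        rw [intervalIntegral.integral_interval_sub_left (hc.intervalIntegrable _ _) (hc.intervalIntegrable _ _)]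
      have h2 : Continuous (fun v => ∫ t in -(k*v)..(k*v), Φ t) := by
        rw [this]
        exact (hp.comp (by fun_prop)).sub (hp.comp (by fun_prop))
      exact Continuous.mul (by fun_prop) h2
    · filter_upwards [eventually_ge_atTop 0] with k hk
      rw [ae_restrict_iff' measurableSet_Ioi]
      refine Eventually.of_forall (fun w hw => ?_)
      have hw : 0 < w := hw
      rw [norm_mul, Complex.norm_real, Real.norm_eq_abs, abs_of_nonneg (by positivity)]
      exact mul_le_mul_of_nonneg_left (hN _ (by positivity)) (by positivity)
    · rw [ae_restrict_iff' measurableSet_Ioi]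
      refine Eventually.of_forall (fun w hw => ?_)
      exact (hL.comp (tendsto_id.atTop_mul_const hw)).const_mul _
  refine hD.congr' ?_
  filter_upwards [eventually_gt_atTop 0] with k hk
  exact (abel_parts hc hM hk hN).symm

open FourierTransform in
lemma gauss_fourier {g : ℝ → ℂ} (hg : Integrable g) {s : ℝ} (hs : ContinuousAt g s) :
    Tendsto (fun c : ℝ => ∫ w : ℝ, Complex.exp (-c⁻¹ * ‖w‖^2 + 2 * Real.pi * Complex.I * (inner ℝ s w : ℝ)) • 𝓕 g w)
      atTop (nhds (g s)) := by
  refine (Real.tendsto_integral_gaussian_smul' hg hs).congr' ?_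
  filter_upwards [Ioi_mem_atTop 0] with c hc
  have hc : 0 < c := hc
  have J : Integrable (fun w : ℝ ↦ Complex.exp (- c⁻¹ * ‖w‖ ^ 2 + 2 * Real.pi * Complex.I * (inner ℝ s w : ℝ))) :=
    GaussianFourier.integrable_cexp_neg_mul_sq_norm_add (by simpa) _ _
  have h := (VectorFourier.integral_fourierIntegral_smul_eq_flip (L := innerₗ ℝ)
      Real.continuous_fourierChar continuous_inner J hg)
  have h' : ∫ w, 𝓕 (fun w : ℝ ↦ Complex.exp (- c⁻¹ * ‖w‖ ^ 2 + 2 * Real.pi * Complex.I * (inner ℝ s w : ℝ))) w • g w =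
    ∫ w : ℝ, Complex.exp (-c⁻¹ * ‖w‖^2 + 2 * Real.pi * Complex.I * (inner ℝ s w : ℝ)) • 𝓕 g w := by
    simpa using! h
  rw [← h']
  congr with w
  rw [fourier_gaussian_innerProductSpace' (by simpa)]
  congr 2
  · simp
  · congr 1
    rw [Complex.ofReal_inv, div_inv_eq_mul]; ring

open FourierTransform in
theorem inversion {g : ℝ → ℂ} (hg : Integrable g) {s : ℝ} (hs : ContinuousAt g s) {L : ℂ}
    (hL : Tendsto (fun R : ℝ => ∫ t in -R..R, Complex.exp (2 * Real.pi * Complex.I * (s * t : ℝ)) * 𝓕 g t) atTop (nhds L)) :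
    L = g s := by
  have hFc : Continuous (𝓕 g) :=
    VectorFourier.fourierIntegral_continuous Real.continuous_fourierChar (L := innerₗ ℝ) continuous_inner hg
  have h1 := abel_lemma (Φ := fun t => Complex.exp (2 * Real.pi * Complex.I * (s * t : ℝ)) * 𝓕 g t)
    (by fun_prop) (M := ∫ v, ‖g v‖) (fun t => by
      rw [norm_mul]
      have : ‖Complex.exp (2 * Real.pi * Complex.I * (s * t : ℝ))‖ = 1 := by
        rw [show (2 * Real.pi * Complex.I * (s * t : ℝ) : ℂ) = ((2 * Real.pi * (s * t) : ℝ) : ℂ) * Complex.I by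
          push_cast; ring]
        exact Complex.norm_exp_ofReal_mul_I _
      rw [this, one_mul]
      exact VectorFourier.norm_fourierIntegral_le_integral_norm _ _ _ _ _) hL
  have h2 := (gauss_fourier hg hs).comp (tendsto_pow_atTop (α := ℝ) two_ne_zero)
  refine tendsto_nhds_unique h1 (h2.congr' ?_)
  filter_upwards [eventually_gt_atTop 0] with k hk
  simp only [Function.comp]
  congr 1; ext w
  rw [smul_eq_mul, Complex.exp_add, mul_assoc, Complex.ofReal_exp]
  congr 2
  · have : ‖w‖^2 = w^2 := by simp
    norm_cast
    rw [this]; field_simp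
  · simp [mul_comm]

section
variable {p q : ℕ} {A : Fin p → ℝ} {B : Fin q → ℝ} {a : Fin p → ℝ} {b : Fin q → ℝ}

lemma log_W_deriv (hA : ∀ k, 0 < A k) (hB : ∀ j, 0 < B j) (ha : ∀ k, 0 ≤ a k) (hb : ∀ j, 0 ≤ b j)
    {W : ℝ → ℝ}
    (hW : ∀ x, W x = (∏ i, Real.Gamma (A i * x + a i)) / ∏ j, Real.Gamma (B j * x + b j))
    {x : ℝ} (hx : 0 < x) :
    -deriv (fun y => Real.log (W y)) x = -(((∑ k, A k) - ∑ j, B j) * Real.log x) -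
      Real.log ((∏ k, A k ^ A k) * ∏ j, B j ^ (-B j)) +
      ((∑ j, b j) - (∑ k, a k) + ((p : ℝ) - (q : ℝ)) / 2) * (1 / x)
      + Lap (fun t => t * rr A B a b t) x := by
  have e : (fun y => Real.log (W y)) =ᶠ[nhds x] fun x => ((∑ k, A k) - ∑ j, B j) * (x * Real.log x - x) +
      x * Real.log ((∏ k, A k ^ A k) * ∏ j, B j ^ (-B j))
      - ((∑ j, b j) - (∑ k, a k) + ((p : ℝ) - (q : ℝ)) / 2) * Real.log x
      + Kc A B a b + Lap (rr A B a b) x := by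
    filter_upwards [Ioi_mem_nhds hx] with y hy
    rw [hW y]
    exact log_W hA hB ha hb hy
  rw [e.deriv_eq]
  have hl := Real.hasDerivAt_log hx.ne'
  have h1 := ((((((hasDerivAt_id' x).fun_mul hl).fun_sub (hasDerivAt_id' x)).const_mul ((∑ k, A k) - ∑ j, B j)).fun_add
    ((hasDerivAt_id' x).mul_const (Real.log ((∏ k, A k ^ A k) * ∏ j, B j ^ (-B j))))).fun_sub
    (hl.const_mul ((∑ j, b j) - (∑ k, a k) + ((p : ℝ) - (q : ℝ)) / 2))).fun_add (hasDerivAt_const x (Kc A B a b))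
  have h2 := h1.fun_add (Lap_hasDerivAt (rr_ok hA hB ha hb) hx)
  rw [h2.deriv]
  field_simp
  ring

lemma sum_eq_of_lcm (hA : ∀ k, 0 < A k) (hB : ∀ j, 0 < B j) (ha : ∀ k, 0 ≤ a k) (hb : ∀ j, 0 ≤ b j)
    {W : ℝ → ℝ}
    (hW : ∀ x, W x = (∏ i, Real.Gamma (A i * x + a i)) / ∏ j, Real.Gamma (B j * x + b j))
    (hlcm : CompletelyMonotonicOn (fun x => -deriv (fun y => Real.log (W y)) x)) :
    ∑ k, A k = ∑ j, B j := by
  set g := fun x => -deriv (fun y => Real.log (W y)) x with hg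
  set D := (∑ k, A k) - ∑ j, B j with hD
  set L := Real.log ((∏ k, A k ^ A k) * ∏ j, B j ^ (-B j))
  set μ := ((∑ j, b j) - (∑ k, a k) + ((p : ℝ) - (q : ℝ)) / 2)
  have hgx : ∀ x > 0, g x = -(D * Real.log x) - L + μ * (1/x) + Lap (fun t => t * rr A B a b t) x :=
    fun x hx => log_W_deriv hA hB ha hb hW hx
  have hlim : Tendsto (fun x => - L + μ * (1/x) + Lap (fun t => t * rr A B a b t) x) atTop (nhds (-L + μ * 0 + 0)) := by
    have h0 : Tendsto (fun x : ℝ => 1 / x) atTop (nhds 0) := by simpa using tendsto_inv_atTop_zero (𝕜 := ℝ)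
    exact Tendsto.add (tendsto_const_nhds.add (Tendsto.const_mul _ h0)) (Lap_tendsto (rr_ok hA hB ha hb).mul_t)
  have hg0 : ∀ x > 0, 0 ≤ g x := fun x hx => by simpa using hlcm.2 0 x hx
  have hanti : AntitoneOn g (Set.Ioi 0) := by
    have hdiff : DifferentiableOn ℝ g (Set.Ioi 0) := fun x hx =>
      ((hlcm.1 x hx).differentiableAt (by simp)).differentiableWithinAt
    refine antitoneOn_of_deriv_nonpos (convex_Ioi 0) hdiff.continuousOn (by rw [interior_Ioi]; exact hdiff) ?_
    intro x hx
    rw [interior_Ioi] at hx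
    have := hlcm.2 1 x hx
    rw [iteratedDeriv_one] at this
    linarith
  rcases lt_trichotomy D 0 with h | h | h
  · exfalso
    have h1 : Tendsto (fun x => (-D) * Real.log x + (- L + μ * (1/x) + Lap (fun t => t * rr A B a b t) x)) atTop atTop :=
      (Real.tendsto_log_atTop.const_mul_atTop (by linarith)).atTop_add hlim
    obtain ⟨x, hx1, hx2⟩ := ((h1.eventually_gt_atTop (g 1)).and (eventually_ge_atTop 1)).exists
    have h3 : g x ≤ g 1 := hanti (Set.mem_Ioi.2 one_pos) (Set.mem_Ioi.2 (by linarith)) hx2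
    rw [hgx x (by linarith)] at h3
    linarith
  · linarith
  · exfalso
    have h1 : Tendsto (fun x => (-D) * Real.log x + (- L + μ * (1/x) + Lap (fun t => t * rr A B a b t) x)) atTop atBot :=
      (Real.tendsto_log_atTop.const_mul_atTop_of_neg (by linarith)).atBot_add hlim
    obtain ⟨x, hx1, hx2⟩ := ((h1.eventually_lt_atBot 0).and (eventually_ge_atTop 1)).exists
    have h3 := hg0 x (by linarith)
    rw [hgx x (by linarith)] at h3
    linarith

noncomputable def QQ {p q : ℕ} (A : Fin p → ℝ) (B : Fin q → ℝ) (a : Fin p → ℝ) (b : Fin q → ℝ) (t : ℝ) : ℝ :=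
  ((∑ j, b j) - (∑ k, a k) + ((p : ℝ) - (q : ℝ)) / 2) * 1 + t * rr A B a b t

lemma QQ_ok (hA : ∀ k, 0 < A k) (hB : ∀ j, 0 < B j) (ha : ∀ k, 0 ≤ a k) (hb : ∀ j, 0 ≤ b j) :
    LapOK (QQ A B a b) := (lapOK_one.const_mul _).add (rr_ok hA hB ha hb).mul_t

lemma QQ_lap (hA : ∀ k, 0 < A k) (hB : ∀ j, 0 < B j) (ha : ∀ k, 0 ≤ a k) (hb : ∀ j, 0 ≤ b j) {x : ℝ} (hx : 0 < x) :
    Lap (QQ A B a b) x = ((∑ j, b j) - (∑ k, a k) + ((p : ℝ) - (q : ℝ)) / 2) * (1 / x)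
      + Lap (fun t => t * rr A B a b t) x := by
  have := Lap_add (lapOK_one.const_mul ((∑ j, b j) - (∑ k, a k) + ((p : ℝ) - (q : ℝ)) / 2)) (rr_ok hA hB ha hb).mul_t hx
  rw [Lap_const_mul, Lap_one hx] at this
  exact this

lemma QQ_nonneg (hA : ∀ k, 0 < A k) (hB : ∀ j, 0 < B j) (ha : ∀ k, 0 ≤ a k) (hb : ∀ j, 0 ≤ b j)
    {W : ℝ → ℝ}
    (hW : ∀ x, W x = (∏ i, Real.Gamma (A i * x + a i)) / ∏ j, Real.Gamma (B j * x + b j))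
    (hlcm : CompletelyMonotonicOn (fun x => -deriv (fun y => Real.log (W y)) x)) :
    ∀ t > 0, 0 ≤ QQ A B a b t := by
  have hAB := sum_eq_of_lcm hA hB ha hb hW hlcm
  have hok := QQ_ok hA hB ha hb
  refine post_widder hok ?_ ?_
  · unfold QQ
    exact continuousOn_const.add (continuousOn_id.mul (rr_cont hA hB))
  · intro n hn x hx
    have h1 := hlcm.2 n x hx
    have e : (fun x => -deriv (fun y => Real.log (W y)) x) =ᶠ[nhds x]
        fun y => -Real.log ((∏ k, A k ^ A k) * ∏ j, B j ^ (-B j)) + Lap (QQ A B a b) y := by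
      filter_upwards [Ioi_mem_nhds hx] with y hy
      rw [log_W_deriv hA hB ha hb hW hy, QQ_lap hA hB ha hb hy, hAB]
      ring
    rw [e.iteratedDeriv_eq n, iteratedDeriv_const_add (by lia), Lap_iteratedDeriv hok n hx, ← mul_assoc,
      ← mul_pow] at h1
    simpa using h1

lemma ratio_ge (hA : ∀ k, 0 < A k) (hB : ∀ j, 0 < B j) (hAB : ∑ k, A k = ∑ j, B j)
    (hQ : ∀ t > 0, 0 ≤ QQ A B a b t) {κ : ℝ} (hκ : ∀ k, κ ≤ a k / A k) (j : Fin q) : κ ≤ b j / B j := by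
  by_contra hlt
  push Not at hlt
  set β := b j / B j with hβ
  have hden : ∀ {A t : ℝ}, 0 < A → 0 < t → 0 < 1 - Real.exp (-(t / A)) := fun hA ht =>
    one_sub_exp_pos (div_pos ht hA)
  have hlim : Tendsto (fun t : ℝ => ∑ k : Fin p, 1 / (1 - Real.exp (-(t / A k)))) atTop (nhds (∑ k : Fin p, 1 / (1 - 0))) := by
    refine tendsto_finset_sum _ (fun k _ => ?_)
    refine Tendsto.div tendsto_const_nhds (tendsto_const_nhds.sub ?_) (by norm_num)
    exact Real.tendsto_exp_neg_atTop_nhds_zero.comp (tendsto_id.atTop_div_const (hA k))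
  have hinf : Tendsto (fun t : ℝ => Real.exp ((κ - β) * t)) atTop atTop :=
    Real.tendsto_exp_atTop.comp (tendsto_id.const_mul_atTop (by linarith))
  obtain ⟨t, ⟨h1, h2⟩, ht⟩ := (((hinf.eventually_gt_atTop (∑ k : Fin p, 1 / (1 - 0) + 1)).and
    (hlim.eventually_lt_const (show _ < ∑ k : Fin p, (1:ℝ) / (1 - 0) + 1 by linarith))).and (eventually_gt_atTop 0)).exists
  have hq := hQ t ht
  unfold QQ at hq
  rw [mul_one, t_rr hA hB hAB ht] at hq
  have h3 : EE (B j) (b j) t ≤ ∑ j, EE (B j) (b j) t :=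
    Finset.single_le_sum (f := fun j => EE (B j) (b j) t) (fun i _ => div_nonneg (Real.exp_pos _).le (hden (hB i) ht).le) (Finset.mem_univ j)
  have h4 : Real.exp (-(β * t)) ≤ EE (B j) (b j) t := by
    unfold EE
    rw [le_div_iff₀ (hden (hB j) ht)]
    have : b j * (t / B j) = β * t := by rw [hβ]; ring
    rw [this]
    have := Real.exp_pos (-(t / B j))
    have := Real.exp_pos (-(β * t))
    nlinarith
  have h5 : ∑ k, EE (A k) (a k) t ≤ ∑ k, Real.exp (-(κ * t)) * (1 / (1 - Real.exp (-(t / A k)))) := by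
    refine Finset.sum_le_sum (fun k _ => ?_)
    unfold EE
    rw [mul_one_div]
    refine div_le_div_of_nonneg_right (Real.exp_le_exp.2 ?_) (hden (hA k) ht).le
    have : a k * (t / A k) = a k / A k * t := by ring
    rw [this]
    have := hκ k
    nlinarith
  rw [← Finset.mul_sum] at h5
  have h6 : Real.exp ((κ - β) * t) = Real.exp (κ * t) * Real.exp (-(β * t)) := by
    rw [← Real.exp_add]; ring_nf
  have h7 : Real.exp (κ * t) * Real.exp (-(κ * t)) = 1 := by rw [← Real.exp_add]; simp
  have h8 : Real.exp (-(β * t)) ≤ Real.exp (-(κ * t)) * ∑ k, 1 / (1 - Real.exp (-(t / A k))) := by linarith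
  have h9 := mul_le_mul_of_nonneg_left h8 (Real.exp_pos (κ * t)).le
  rw [← mul_assoc, h7, one_mul, ← h6] at h9
  linarith

lemma Lap_pos_induct {f Q : ℝ → ℝ} (hf : LapOK f) (hQ : LapOK Q) (hQ0 : ∀ t > 0, 0 ≤ Q t)
    (hf0 : ∀ x > 0, 0 ≤ Lap f x) (h : ∀ x > 0, Lap (fun t => t * f t) x = Lap f x * Lap Q x) (n : ℕ) :
    ∀ x > 0, 0 ≤ Lap (fun t => t ^ n * f t) x := by
  have hLQ : ∀ n : ℕ, ∀ x, 0 ≤ Lap (fun t => t ^ n * Q t) x := fun n x => by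
    unfold Lap
    refine setIntegral_nonneg measurableSet_Ioi (fun t ht => ?_)
    have ht : 0 < t := ht
    have := hQ0 t ht
    positivity
  induction n using Nat.strong_induction_on with
  | _ n ih =>
    intro x hx
    rcases n with _ | n
    · simpa using hf0 x hx
    · have e : Lap (fun t => t * f t) =ᶠ[nhds x] (Lap f * Lap Q) := by
        filter_upwards [Ioi_mem_nhds hx] with y hy
        exact h y hy
      have h1 := e.iteratedDeriv_eq n
      rw [Lap_iteratedDeriv hf.mul_t n hx, iteratedDeriv_mul (Lap_contDiffAt hf hx).contDiffAt (Lap_contDiffAt hQ hx).contDiffAt] at h1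
      have h2 : Lap (fun t => t ^ (n+1) * f t) x = ∑ i ∈ Finset.range (n+1), (n.choose i : ℝ) * Lap (fun t => t ^ i * f t) x * Lap (fun t => t ^ (n - i) * Q t) x := by
        have e2 : Lap (fun t => t ^ (n+1) * f t) x = (-1) ^ n * ((-1)^n * Lap (fun t => t ^ n * (t * f t)) x) := by
          rw [← mul_assoc, ← mul_pow]
          simp only [neg_mul_neg, mul_one, one_pow, one_mul]
          exact Lap_congr (fun t _ => by ring) x
        rw [e2, h1, Finset.mul_sum]
        refine Finset.sum_congr rfl (fun i hi => ?_)
        rw [Lap_iteratedDeriv hf i hx, Lap_iteratedDeriv hQ (n - i) hx]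
        have : i + (n - i) = n := by have := Finset.mem_range.1 hi; lia
        have e3 : (-1:ℝ)^n * ((-1)^i * (-1)^(n-i)) = 1 := by
          rw [← pow_add, this, ← mul_pow]; simp
        linear_combination ((n.choose i : ℝ) * Lap (fun t => t ^ i * f t) x * Lap (fun t => t ^ (n - i) * Q t) x) * e3
      rw [h2]
      refine Finset.sum_nonneg (fun i hi => ?_)
      have := ih i (Finset.mem_range.1 hi) x hx
      have := hLQ (n - i) x
      positivity
end

open FourierTransform in
lemma inv_lap {φ : ℝ → ℝ} {d : ℝ} (hφ : IntegrableOn (fun σ => Real.exp (-(d * σ)) * φ σ) (Set.Ioi 0))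
    (hc : ContinuousOn φ (Set.Ioi 0)) {s : ℝ} (hs : 0 < s) {L : ℂ}
    (hL : Tendsto (fun R : ℝ => (((2 * Real.pi)⁻¹ : ℝ) : ℂ) * ∫ t in -R..R,
      Complex.exp (((d:ℂ) + (t:ℂ) * Complex.I) * s) *
        ∫ σ in Set.Ioi (0:ℝ), Complex.exp (-(((d:ℂ) + (t:ℂ) * Complex.I) * σ)) * (φ σ : ℂ)) atTop (nhds L)) :
    L = φ s := by
  set g : ℝ → ℂ := (Set.Ioi (0:ℝ)).indicator (fun σ => ((Real.exp (-(d * σ)) * φ σ : ℝ) : ℂ)) with hg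
  have hgi : Integrable g := (integrable_indicator_iff measurableSet_Ioi).2 hφ.ofReal
  have hgc : ContinuousAt g s := by
    have h1 : ContinuousAt φ s := hc.continuousAt (Ioi_mem_nhds hs)
    have h2 : ContinuousAt (fun σ => ((Real.exp (-(d * σ)) * φ σ : ℝ) : ℂ)) s := by fun_prop
    refine h2.congr ?_
    filter_upwards [Ioi_mem_nhds hs] with y hy
    rw [hg, Set.indicator_of_mem hy]
  have hF : ∀ ξ : ℝ, 𝓕 g ξ = ∫ σ in Set.Ioi (0:ℝ), Complex.exp (-(((d:ℂ) + ((2 * Real.pi * ξ : ℝ):ℂ) * Complex.I) * σ)) * (φ σ : ℂ) := by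
    intro ξ
    rw [Real.fourier_real_eq_integral_exp_smul, ← integral_indicator measurableSet_Ioi]
    congr 1; ext σ
    rw [hg]
    by_cases h : σ ∈ Set.Ioi (0:ℝ)
    · rw [Set.indicator_of_mem h, Set.indicator_of_mem h, smul_eq_mul]
      push_cast
      rw [← mul_assoc, ← Complex.exp_add]
      congr 2
      ring
    · rw [Set.indicator_of_notMem h, Set.indicator_of_notMem h, smul_zero]
  have hpi : (2 * Real.pi) ≠ 0 := by positivity
  have key := inversion hgi hgc (L := Complex.exp (-(d * s)) * L) ?_
  · rw [hg, Set.indicator_of_mem (Set.mem_Ioi.2 hs)] at key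
    push_cast at key
    exact mul_left_cancel₀ (Complex.exp_ne_zero _) key
  · have h1 := (hL.comp (tendsto_id.const_mul_atTop (show 0 < 2 * Real.pi by positivity))).const_mul (Complex.exp (-(d * s)))
    refine h1.congr (fun R => ?_)
    simp only [Function.comp, id]
    have h2 := intervalIntegral.integral_comp_mul_left (a := -R) (b := R) (fun t : ℝ => Complex.exp (((d:ℂ) + (t:ℂ) * Complex.I) * s) *
        ∫ σ in Set.Ioi (0:ℝ), Complex.exp (-(((d:ℂ) + (t:ℂ) * Complex.I) * σ)) * (φ σ : ℂ)) hpi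
    rw [Complex.real_smul, mul_neg] at h2
    rw [← h2, ← intervalIntegral.integral_const_mul]
    congr 1; ext ξ
    rw [hF ξ, ← mul_assoc, ← Complex.exp_add]
    congr 2
    push_cast; ring

section
variable {p q : ℕ} {A : Fin p → ℝ} {B : Fin q → ℝ} {a : Fin p → ℝ} {b : Fin q → ℝ}

lemma complex_ext (hA : ∀ k, 0 < A k) (hB : ∀ j, 0 < B j) (ha : ∀ k, 0 ≤ a k) (hb : ∀ j, 0 ≤ b j)
    {f : ℝ → ℝ} (hf : LapOK f) {K l : ℝ}
    (h : ∀ y > 0, (∏ i, Real.Gamma (A i * y + a i)) / ∏ j, Real.Gamma (B j * y + b j) =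
      Real.exp (K + y * l) * Lap f y) {z : ℂ} (hz : 0 < z.re) :
    (∏ i, Complex.Gamma (A i * z + a i)) / ∏ j, Complex.Gamma (B j * z + b j) =
      Complex.exp (K + z * l) * ∫ t in Set.Ioi (0:ℝ), Complex.exp (-(z * t)) * (f t : ℂ) := by
  set U : Set ℂ := {z | 0 < z.re} with hU
  have hUo : IsOpen U := isOpen_lt continuous_const Complex.continuous_re
  have hUc : IsPreconnected U := (convex_halfSpace_re_gt 0).isPreconnected
  have hre : ∀ {A a : ℝ} {z : ℂ}, 0 < A → 0 ≤ a → z ∈ U → 0 < ((A:ℂ) * z + a).re := by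
    intro A a z hA ha hz
    have hz : 0 < z.re := hz
    simp
    positivity
  have hG : ∀ {A a : ℝ} {z : ℂ}, 0 < A → 0 ≤ a → z ∈ U →
      DifferentiableAt ℂ (fun z => Complex.Gamma ((A:ℂ) * z + a)) z := by
    intro A a z hA ha hz
    have hp := hre hA ha hz
    refine DifferentiableAt.comp (f := fun z => (A:ℂ) * z + a) (g := Complex.Gamma) z (Complex.differentiableAt_Gamma _ (fun m hm => ?_)) (by fun_prop)
    rw [hm] at hp
    simp at hp
    linarith [(Nat.cast_nonneg m : (0:ℝ) ≤ m)]
  have h1 : AnalyticOnNhd ℂ (fun z : ℂ => (∏ i, Complex.Gamma (A i * z + a i)) / ∏ j, Complex.Gamma (B j * z + b j)) U := by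
    refine DifferentiableOn.analyticOnNhd (fun z hz => DifferentiableAt.differentiableWithinAt ?_) hUo
    refine DifferentiableAt.div ?_ ?_ ?_
    · exact DifferentiableAt.fun_finset_prod (fun i _ => hG (hA i) (ha i) hz)
    · exact DifferentiableAt.fun_finset_prod (fun i _ => hG (hB i) (hb i) hz)
    · exact Finset.prod_ne_zero_iff.2 (fun i _ => Complex.Gamma_ne_zero_of_re_pos (hre (hB i) (hb i) hz))
  have h2 : AnalyticOnNhd ℂ (fun z : ℂ => Complex.exp (K + z * l) * ∫ t in Set.Ioi (0:ℝ), Complex.exp (-(z * t)) * (f t : ℂ)) U := by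
    refine DifferentiableOn.analyticOnNhd (fun z hz => DifferentiableAt.differentiableWithinAt ?_) hUo
    exact DifferentiableAt.mul (by fun_prop) (LapC_hasDerivAt hf hz).differentiableAt
  have h1U : (1:ℂ) ∈ U := by simp [hU]
  refine h1.eqOn_of_preconnected_of_frequently_eq h2 hUc h1U ?_ hz
  have ht : Tendsto (fun x : ℝ => (x:ℂ)) (nhdsWithin 1 {1}ᶜ) (nhdsWithin (1:ℂ) {1}ᶜ) := by
    refine tendsto_nhdsWithin_of_tendsto_nhds_of_eventually_within _ ?_ ?_
    · have : Tendsto (fun x : ℝ => (x:ℂ)) (nhds 1) (nhds ((1:ℝ):ℂ)) := Complex.continuous_ofReal.tendsto 1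
      rw [Complex.ofReal_one] at this
      exact this.mono_left nhdsWithin_le_nhds
    · filter_upwards [self_mem_nhdsWithin] with x hx
      simpa using hx
  refine ht.frequently (Eventually.frequently ?_)
  filter_upwards [nhdsWithin_le_nhds (Ioi_mem_nhds (show (0:ℝ) < 1 by norm_num))] with x hx
  rw [LapC_ofReal]
  have := congrArg (fun r : ℝ => (r : ℂ)) (h x hx)
  push_cast [← Complex.Gamma_ofReal] at this
  exact this
end

lemma shift_Ioi (g : ℝ → ℝ) (m : ℝ) :
    ∫ t in Set.Ioi (0:ℝ), g (t + m) = ∫ t in Set.Ioi m, g t := by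
  have h := (measurePreserving_add_right (volume : Measure ℝ) m).setIntegral_preimage_emb
    (measurableEmbedding_addRight m) g (Set.Ioi m)
  rw [← h]
  congr 2
  ext t; simp

theorem stmt16 (p q : ℕ) (hp : 1 ≤ p) (hq : 1 ≤ q)
    (A : Fin p → ℝ) (B : Fin q → ℝ) (a : Fin p → ℝ) (b : Fin q → ℝ)
    (hA : ∀ k, 0 < A k) (hB : ∀ j, 0 < B j)
    (ha : ∀ k, 0 ≤ a k) (hb : ∀ j, 0 ≤ b j)
    (hμ : 0 < (∑ j, b j) - (∑ k, a k) + ((p : ℝ) - (q : ℝ)) / 2)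
    (W : ℝ → ℝ)
    (hW : ∀ x, W x = (∏ i, Real.Gamma (A i * x + a i)) / ∏ j, Real.Gamma (B j * x + b j))
    (ρ : ℝ) (hρ : ρ = (∏ k, A k ^ A k) * ∏ j, B j ^ (-B j))
    (γ : ℝ) (hγ : γ = -(⨅ k, a k / A k))
    (c : ℝ) (hc : γ < c)
    (H : ℝ → ℝ)
    (hH : ∀ u ∈ Set.Ioo (0 : ℝ) ρ,
      Tendsto (fun R : ℝ => (((2 * Real.pi)⁻¹ : ℝ) : ℂ) *
        ∫ t in -R..R,
          (∏ k, Complex.Gamma ((A k : ℂ) * ((c : ℂ) + (t : ℂ) * Complex.I) + (a k : ℂ))) /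
            (∏ j, Complex.Gamma ((B j : ℂ) * ((c : ℂ) + (t : ℂ) * Complex.I) + (b j : ℂ))) *
            (u : ℂ) ^ (-((c : ℂ) + (t : ℂ) * Complex.I)))
        atTop (nhds ((H u : ℂ))))
    (hlcm : LogCompletelyMonotonic W) :
    (∀ x > (0 : ℝ), W x =
        ∫ t in Set.Ioi (Real.log (1 / ρ)), Real.exp (-t * x) * H (Real.exp (-t))) ∧
      ∀ u ∈ Set.Ioo (0 : ℝ) ρ, 0 ≤ H u := by
  obtain ⟨_, hcm⟩ := hlcm
  have hAB := sum_eq_of_lcm hA hB ha hb hW hcm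
  have hQ := QQ_nonneg hA hB ha hb hW hcm
  set κ := ⨅ k, a k / A k with hκd
  have hκ : ∀ k, κ ≤ a k / A k := fun k => ciInf_le (Set.finite_range _).bddBelow k
  have hκ0 : 0 ≤ κ := Real.iInf_nonneg (fun k => div_nonneg (ha k) (hA k).le)
  have hβ := ratio_ge hA hB hAB hQ hκ
  set a0 : Fin p → ℝ := fun k => a k - κ * A k with ha0d
  set b0 : Fin q → ℝ := fun k => b k - κ * B k with hb0d
  have ha0 : ∀ k, 0 ≤ a0 k := fun k => sub_nonneg.2 ((le_div_iff₀ (hA k)).1 (hκ k))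
  have hb0 : ∀ k, 0 ≤ b0 k := fun k => sub_nonneg.2 ((le_div_iff₀ (hB k)).1 (hβ k))
  set μ := (∑ j, b j) - (∑ k, a k) + ((p : ℝ) - (q : ℝ)) / 2 with hμd
  have hμ0 : (∑ j, b0 j) - (∑ k, a0 k) + ((p : ℝ) - (q : ℝ)) / 2 = μ := by
    simp only [ha0d, hb0d, Finset.sum_sub_distrib, ← Finset.mul_sum, hAB]
    rw [hμd]; ring
  have hρ0 : 0 < ρ := hρ ▸ rho_pos hA hB
  set l := Real.log ρ with hl
  set K0 := Kc A B a0 b0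
  obtain ⟨M, hM⟩ := rr_bdd hA hB ha0 hb0
  obtain ⟨f0, hf0c, hf0, hf0L⟩ := exists_density hμ (rr_meas (A := A) (B := B) (a := a0) (b := b0)) (rr_cont hA hB) hM
  have h0 : ∀ y > 0, (∏ i, Real.Gamma (A i * y + a0 i)) / ∏ j, Real.Gamma (B j * y + b0 j) =
      Real.exp (K0 + y * l) * Lap f0 y := by
    intro y hy
    rw [← Real.exp_log (W_pos hA hB ha0 hb0 hy), log_W hA hB ha0 hb0 hy, hf0L y hy, hμ0, ← hρ, hAB,
      Real.rpow_def_of_pos hy, ← Real.exp_add, ← Real.exp_add]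
    congr 1
    ring
  set C := Real.exp (K0 + κ * l) with hC
  have hCpos : 0 < C := Real.exp_pos _
  set f : ℝ → ℝ := fun s => C * (Real.exp (-(κ * s)) * f0 s) with hfd
  have hfe : ∀ x t, Real.exp (-(x * t)) * f t = C * (Real.exp (-((x + κ) * t)) * f0 t) := by
    intro x t
    have : Real.exp (-((x + κ) * t)) = Real.exp (-(x * t)) * Real.exp (-(κ * t)) := by
      rw [← Real.exp_add]; ring_nf
    rw [hfd, this]; ring
  have hfok : LapOK f := by
    intro x hx
    refine ((hf0 (x + κ) (by linarith)).const_mul C).congr (Eventually.of_forall (fun t => ?_))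
    exact (hfe x t).symm
  have hfL : ∀ x, Lap f x = C * Lap f0 (x + κ) := by
    intro x
    unfold Lap
    rw [← integral_const_mul]
    congr 1; ext t
    exact hfe x t
  have hfc : ContinuousOn f (Set.Ioi 0) :=
    continuousOn_const.mul (ContinuousOn.mul (by fun_prop) hf0c)
  have hWf : ∀ x > 0, W x = Real.exp (x * l) * Lap f x := by
    intro x hx
    have := h0 (x + κ) (by linarith)
    rw [hfL, hW x, hC, ← mul_assoc, ← Real.exp_add]
    have e1 : ∀ k, A k * (x + κ) + a0 k = A k * x + a k := fun k => by rw [ha0d]; ring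
    have e2 : ∀ k, B k * (x + κ) + b0 k = B k * x + b k := fun k => by rw [hb0d]; ring
    simp only [e1, e2] at this
    rw [this]
    congr 2; ring
  have hfexp : ∀ x > 0, Lap f x = Real.exp (-(μ * Real.log x) + Kc A B a b + Lap (rr A B a b) x) := by
    intro x hx
    have h1 := hWf x hx
    rw [hW x, ← Real.exp_log (W_pos hA hB ha hb hx), log_W hA hB ha hb hx, ← hρ, hAB] at h1
    have h2 : Lap f x = Real.exp (-(x * l)) * (Real.exp (x * l) * Lap f x) := by
      rw [← mul_assoc, ← Real.exp_add]; simp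
    rw [h2, ← h1, ← Real.exp_add]
    congr 1
    ring
  have hrec : ∀ x > 0, Lap (fun t => t * f t) x = Lap f x * Lap (QQ A B a b) x := by
    intro x hx
    have h1 := Lap_hasDerivAt hfok hx
    have h2 : HasDerivAt (fun x => Real.exp (-(μ * Real.log x) + Kc A B a b + Lap (rr A B a b) x))
        (Real.exp (-(μ * Real.log x) + Kc A B a b + Lap (rr A B a b) x) *
          (-(μ * x⁻¹) + 0 + -Lap (fun t => t * rr A B a b t) x)) x :=
      ((((Real.hasDerivAt_log hx.ne').const_mul μ).fun_neg.fun_add (hasDerivAt_const x (Kc A B a b))).fun_add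
        (Lap_hasDerivAt (rr_ok hA hB ha hb) hx)).exp
    have e : Lap f =ᶠ[nhds x] fun x => Real.exp (-(μ * Real.log x) + Kc A B a b + Lap (rr A B a b) x) := by
      filter_upwards [Ioi_mem_nhds hx] with y hy
      exact hfexp y hy
    have h3 := h1.unique (h2.congr_of_eventuallyEq e)
    rw [← hfexp x hx] at h3
    rw [QQ_lap hA hB ha hb hx, one_div]
    linear_combination -h3
  have hfpos : ∀ s > 0, 0 ≤ f s := by
    refine post_widder hfok hfc (fun n _ => ?_)
    refine Lap_pos_induct hfok (QQ_ok hA hB ha hb) hQ (fun x hx => ?_) hrec n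
    rw [hfexp x hx]; exact (Real.exp_pos _).le
  have hcκ : 0 < c + κ := by linarith
  have hHf : ∀ s > 0, H (Real.exp (l - s)) = f s := by
    intro s hs
    have hu : Real.exp (l - s) ∈ Set.Ioo (0:ℝ) ρ := by
      refine ⟨Real.exp_pos _, ?_⟩
      calc Real.exp (l - s) < Real.exp l := Real.exp_lt_exp.2 (by linarith)
        _ = ρ := Real.exp_log hρ0
    have h1 := (hH _ hu).const_mul ((C * Real.exp (-(κ * s)) : ℝ) : ℂ)⁻¹
    have h2 := inv_lap (d := c + κ) (hf0 (c + κ) hcκ) hf0c hs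
      (L := ((C * Real.exp (-(κ * s)) : ℝ) : ℂ)⁻¹ * (H (Real.exp (l - s)) : ℂ)) ?_
    · have hne : ((C * Real.exp (-(κ * s)) : ℝ) : ℂ) ≠ 0 := by
        rw [Complex.ofReal_ne_zero]; positivity
      rw [inv_mul_eq_iff_eq_mul₀ hne, ← Complex.ofReal_mul, Complex.ofReal_inj] at h2
      rw [h2, hfd]; ring
    · refine h1.congr (fun R => ?_)
      rw [mul_left_comm]
      congr 1
      rw [← intervalIntegral.integral_const_mul]
      congr 1; ext t
      have hz : 0 < ((c:ℂ) + (t:ℂ) * Complex.I + κ).re := by simpa using hcκ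
      have h3 := complex_ext hA hB ha0 hb0 hf0 h0 hz
      have e1 : ∀ k, (A k : ℂ) * ((c:ℂ) + (t:ℂ) * Complex.I + κ) + (a0 k : ℂ) = A k * ((c:ℂ) + (t:ℂ) * Complex.I) + a k :=
        fun k => by rw [ha0d]; push_cast; ring
      have e2 : ∀ k, (B k : ℂ) * ((c:ℂ) + (t:ℂ) * Complex.I + κ) + (b0 k : ℂ) = B k * ((c:ℂ) + (t:ℂ) * Complex.I) + b k :=
        fun k => by rw [hb0d]; push_cast; ring
      simp only [e1, e2] at h3
      rw [h3]
      have e3 : ((Real.exp (l - s) : ℝ) : ℂ) ^ (-((c:ℂ) + (t:ℂ) * Complex.I)) =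
          Complex.exp ((l - s) * (-((c:ℂ) + (t:ℂ) * Complex.I))) := by
        rw [Complex.cpow_def_of_ne_zero (by rw [Complex.ofReal_ne_zero]; exact (Real.exp_pos _).ne'),
          ← Complex.ofReal_log (Real.exp_pos _).le, Real.log_exp]
        push_cast; rfl
      have e4 : ((C * Real.exp (-(κ * s)) : ℝ) : ℂ)⁻¹ = Complex.exp (-(K0 + κ * l - κ * s)) := by
        rw [hC, ← Real.exp_add, ← Complex.ofReal_inv, ← Real.exp_neg]
        push_cast; ring_nf
      have e5 : (((c + κ : ℝ) : ℂ) + (t:ℂ) * Complex.I) = (c:ℂ) + (t:ℂ) * Complex.I + κ := by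
        push_cast; ring
      rw [e3, e4, e5, mul_right_comm, ← mul_assoc, ← Complex.exp_add, ← Complex.exp_add]
      congr 2
      ring
  refine ⟨fun x hx => ?_, fun u hu => ?_⟩
  · have hl' : Real.log (1 / ρ) = -l := by rw [one_div, Real.log_inv]
    rw [hl', hWf x hx]
    have h1 := shift_Ioi (fun t => Real.exp (-t * x) * H (Real.exp (-t))) (-l)
    rw [← h1]
    unfold Lap
    rw [← integral_const_mul]
    refine setIntegral_congr_fun measurableSet_Ioi (fun t ht => ?_)
    have h2 := hHf t ht
    have h3 : -(t + -l) = l - t := by ring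
    rw [h3, h2, ← mul_assoc, ← Real.exp_add]
    congr 2; ring
  · have h1 := hHf (l - Real.log u) (by
      have := Real.log_lt_log hu.1 hu.2
      linarith)
    rw [sub_sub_cancel, Real.exp_log hu.1] at h1
    rw [h1]
    refine hfpos _ ?_
    have := Real.log_lt_log hu.1 hu.2
    linarith
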